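/- For every nonnegative integer n and every k with 0 ≤ k ≤ 4, N(k,5,5n+4) = p(5n+4)/5. -/

import Mathlib

/-- The rank of a partition: its largest part minus its number of parts. -/
def Nat.Partition.rank {n : ℕ} (π : Nat.Partition n) : ℤ :=
  (π.parts.sup : ℤ) - (Multiset.card π.parts : ℤ)

/-!
The proof is that of Atkin and Swinnerton-Dyer. Comparing the removal of the largest part with that
of the first column of the Ferrers diagram yields the recursion
`T m = q ^ (m + 1) * (P - T (m + 3))` between the generating functions `P` of all partitions and
`T m` of the nonempty partitions of rank at least `m`. Hence `T m` is `P` times a partial theta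
series, and for `0 < k < 5` the generating function of `N(k,5,n)` is `P` times a difference of
Lambert series with denominators `1 - q ^ (5 * n)`. It has to be shown that the deviation of this
difference from `1 / 5`, times `P`, has no coefficients of exponents `5 * n + 4`.

Splitting the summation index modulo five turns the Lambert series into Lambert series in `q ^ 25`.
Certain combinations of three such series, cleared of denominators, are entire and quasi-periodic,
so Liouville's theorem evaluates them as theta quotients and logarithmic derivatives of theta
functions. The deviation thus becomes the theta series `1 / P` times a combination of `1`, `q`,
`q ^ 2`, `q ^ 3` whose coefficients are functions of `q ^ 5`.
-/

namespace DysonRank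

open Complex Filter Topology

/-! ### Complex analysis -/

lemma exists_summable_bound_of_eventually {ι X E : Type*} [TopologicalSpace X]
    [SeminormedAddCommGroup E] {K : Set X} (hK : IsCompact K) {F : ι → X → E}
    (hF : ∀ i, ContinuousOn (F i) K) {v : ι → ℝ} (hv : Summable v)
    (hb : ∀ᶠ i in cofinite, ∀ x ∈ K, ‖F i x‖ ≤ v i) :
    ∃ c : ι → ℝ, Summable c ∧ ∀ i, ∀ x ∈ K, ‖F i x‖ ≤ c i := by
  classical
  choose C hC using fun i => hK.exists_bound_of_continuousOn (hF i)
  refine ⟨fun i => if ∀ x ∈ K, ‖F i x‖ ≤ v i then v i else C i, ?_, fun i x hx => ?_⟩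
  · exact hv.congr_cofinite (hb.mono fun i hi => (if_pos hi).symm)
  · dsimp only
    split_ifs with h
    exacts [h x hx, hC i x hx]

section TermwiseDifferentiation

variable {ι E : Type*} [NormedAddCommGroup E] [NormedSpace ℂ E] [CompleteSpace E]
  {F : ι → ℂ → E} {K : Set ℂ} {u₀ : ℂ} {v : ι → ℝ}

lemma differentiableAt_tsum_of_eventually_norm_le (hF : ∀ i, Differentiable ℂ (F i))
    (hK : IsCompact K) (hu₀ : K ∈ 𝓝 u₀) (hv : Summable v)
    (hb : ∀ᶠ i in cofinite, ∀ u ∈ K, ‖F i u‖ ≤ v i) :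
    DifferentiableAt ℂ (fun u => ∑' i, F i u) u₀ := by
  obtain ⟨c, hc, hcb⟩ := exists_summable_bound_of_eventually hK
    (fun i => (hF i).continuous.continuousOn) hv hb
  exact (differentiableOn_tsum_of_summable_norm hc (fun i => (hF i).differentiableOn)
    isOpen_interior fun i u hu => hcb i u (interior_subset hu)).differentiableAt
    (interior_mem_nhds.2 hu₀)

lemma hasSum_deriv_of_eventually_norm_le (hF : ∀ i, Differentiable ℂ (F i))
    (hK : IsCompact K) (hu₀ : K ∈ 𝓝 u₀) (hv : Summable v)
    (hb : ∀ᶠ i in cofinite, ∀ u ∈ K, ‖F i u‖ ≤ v i) :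
    HasSum (fun i => deriv (F i) u₀) (deriv (fun u => ∑' i, F i u) u₀) := by
  obtain ⟨c, hc, hcb⟩ := exists_summable_bound_of_eventually hK
    (fun i => (hF i).continuous.continuousOn) hv hb
  exact hasSum_deriv_of_summable_norm hc (fun i => (hF i).differentiableOn) isOpen_interior
    (fun i u hu => hcb i u (interior_subset hu)) (mem_interior_iff_mem_nhds.2 hu₀)

end TermwiseDifferentiation

lemma apply_eq_apply_of_basis_periodic {ι E F : Type*} [Finite ι] [NormedAddCommGroup E]
    [NormedSpace ℂ E] [NormedAddCommGroup F] [NormedSpace ℂ F] (b : Module.Basis ι ℝ E)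
    {f : E → F} (hf : Differentiable ℂ f) (h : ∀ i u, f (u + b i) = f u) (u v : E) :
    f u = f v := by
  have : Fintype ι := Fintype.ofFinite ι
  have : FiniteDimensional ℝ E := b.finiteDimensional_of_finite
  have : ProperSpace E := FiniteDimensional.proper ℝ E
  have hper : ∀ l ∈ Submodule.span ℤ (Set.range b), ∀ u, f (u + l) = f u := by
    intro l hl
    induction hl using Submodule.span_induction with
    | mem _ hx => obtain ⟨i, rfl⟩ := hx; exact h i
    | zero => simp
    | add x y _ _ hx hy => intro u; rw [← add_assoc, hy, hx]
    | smul n x _ hx => exact fun u => (show Function.Periodic f x from hx).zsmul n u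
  refine hf.apply_eq_apply_of_bounded ?_ u v
  have hK := (ZSpan.fundamentalDomain_isBounded b).isCompact_closure
  refine (hK.image hf.continuous).isBounded.subset ?_
  rintro _ ⟨w, rfl⟩
  refine ⟨ZSpan.fract b w, subset_closure (ZSpan.fract_mem_fundamentalDomain b w), ?_⟩
  rw [← hper _ (ZSpan.floor b w).2, ZSpan.fract_apply, sub_add_cancel]

lemma linearIndependent_pair_of_re_ne_zero {ω : ℂ} (hω : ω.re ≠ 0) {y : ℝ} (hy : y ≠ 0) :
    LinearIndependent ℝ ![ω, y * I] := by
  refine LinearIndependent.pair_iff.2 fun s t h => ?_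
  have hs : s = 0 := by simpa [hω] using congrArg re h
  exact ⟨hs, by simpa [hs, hy] using congrArg im h⟩

lemma apply_eq_apply_of_doubly_periodic {f : ℂ → ℂ} (hf : Differentiable ℂ f) {ω : ℂ}
    (hω : ω.re ≠ 0) (h₁ : ∀ u, f (u + ω) = f u) (h₂ : ∀ u, f (u + 2 * Real.pi * I) = f u)
    (u v : ℂ) : f u = f v := by
  have hli := linearIndependent_pair_of_re_ne_zero hω Real.two_pi_pos.ne'
  refine apply_eq_apply_of_basis_periodic (basisOfLinearIndependentOfCardEqFinrank hli (by simp))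
    hf (fun i u => ?_) u v
  fin_cases i
  · simpa using h₁ u
  · simpa using h₂ u

/-- The quotient `f / g`, with the removable singularities at simple zeros of `g` filled in. -/
noncomputable def removableDiv (f g : ℂ → ℂ) (u : ℂ) : ℂ :=
  open Classical in if g u = 0 then deriv f u / deriv g u else f u / g u

lemma removableDiv_eventuallyEq_dslope_div {f g : ℂ → ℂ} {u₀ : ℂ} (hf : f u₀ = 0) (hg : g u₀ = 0)
    (hd : ContinuousAt (dslope g u₀) u₀) (hg' : deriv g u₀ ≠ 0) :
    removableDiv f g =ᶠ[𝓝 u₀] dslope f u₀ / dslope g u₀ := by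
  filter_upwards [hd.eventually_ne (by rwa [dslope_same])] with u hu
  obtain rfl | hne := eq_or_ne u u₀
  · simp [removableDiv, hg]
  have factor {k : ℂ → ℂ} (hk : k u₀ = 0) : k u = (u - u₀) * dslope k u₀ u := by
    simpa [hk] using (sub_smul_dslope k u₀ u).symm
  have hs : u - u₀ ≠ 0 := sub_ne_zero.2 hne
  rw [removableDiv, if_neg (by rw [factor hg]; exact mul_ne_zero hs hu), factor hf, factor hg,
    Pi.div_apply, mul_div_mul_left _ _ hs]

lemma differentiable_removableDiv {f g : ℂ → ℂ} (hf : Differentiable ℂ f)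
    (hg : Differentiable ℂ g) (h : ∀ u, g u = 0 → f u = 0 ∧ deriv g u ≠ 0) :
    Differentiable ℂ (removableDiv f g) := by
  intro u₀
  have hd {k : ℂ → ℂ} (hk : Differentiable ℂ k) : DifferentiableAt ℂ (dslope k u₀) u₀ :=
    ((differentiableOn_dslope univ_mem).2 hk.differentiableOn).differentiableAt univ_mem
  by_cases h₀ : g u₀ = 0
  · obtain ⟨hf₀, hg₀⟩ := h u₀ h₀
    exact ((hd hf).div (hd hg) (by rwa [dslope_same])).congr_of_eventuallyEq
      (removableDiv_eventuallyEq_dslope_div hf₀ h₀ (hd hg).continuousAt hg₀)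
  · refine ((hf u₀).div (hg u₀) h₀).congr_of_eventuallyEq ?_
    filter_upwards [(hg u₀).continuousAt.eventually_ne h₀] with u hu
    simp [removableDiv, hu]

/-! ### Theta functions -/

/-- The theta series `∑ (-1)^n exp (a n² + b n)`. The logarithmic parameters `a` and `b` avoid
choosing roots of the nome and of the argument. -/
noncomputable def theta (a b : ℂ) : ℂ :=
  ∑' n : ℤ, (-1 : ℂ) ^ n * cexp (a * n ^ 2 + b * n)

lemma neg_one_zpow_eq_exp (n : ℤ) : (-1 : ℂ) ^ n = cexp (Real.pi * I * n) := by
  rw [mul_comm, exp_int_mul, exp_pi_mul_I]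

lemma theta_term_eq_jacobiTheta₂_term (a b : ℂ) (n : ℤ) :
    (-1 : ℂ) ^ n * cexp (a * n ^ 2 + b * n) =
      jacobiTheta₂_term n (b / (2 * Real.pi * I) + 1 / 2) (a / (Real.pi * I)) := by
  have hpi : (Real.pi : ℂ) ≠ 0 := by exact_mod_cast Real.pi_ne_zero
  rw [neg_one_zpow_eq_exp, ← Complex.exp_add, jacobiTheta₂_term]
  congr 1
  field_simp
  ring

lemma im_div_pi_mul_I (a : ℂ) : (a / (Real.pi * I)).im = -a.re / Real.pi := by
  rw [div_mul_eq_div_div, div_I, neg_im, mul_I_im, div_ofReal_re, neg_div]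

lemma im_div_pi_mul_I_pos {a : ℂ} (ha : a.re < 0) : 0 < (a / (Real.pi * I)).im := by
  rw [im_div_pi_mul_I]
  exact div_pos (neg_pos.2 ha) Real.pi_pos

lemma theta_eq_jacobiTheta₂ (a b : ℂ) :
    theta a b = jacobiTheta₂ (b / (2 * Real.pi * I) + 1 / 2) (a / (Real.pi * I)) :=
  tsum_congr (theta_term_eq_jacobiTheta₂_term a b)

lemma hasSum_theta {a : ℂ} (ha : a.re < 0) (b : ℂ) :
    HasSum (fun n : ℤ => (-1 : ℂ) ^ n * cexp (a * n ^ 2 + b * n)) (theta a b) := by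
  rw [theta_eq_jacobiTheta₂]
  exact (hasSum_jacobiTheta₂_term _ (im_div_pi_mul_I_pos ha)).congr_fun
    (theta_term_eq_jacobiTheta₂_term a b)

lemma hasDerivAt_theta {a : ℂ} (ha : a.re < 0) (b : ℂ) :
    HasDerivAt (theta a)
      (jacobiTheta₂' (b / (2 * Real.pi * I) + 1 / 2) (a / (Real.pi * I)) /
        (2 * Real.pi * I)) b := by
  have h := (hasDerivAt_jacobiTheta₂_fst (b / (2 * Real.pi * I) + 1 / 2)
    (im_div_pi_mul_I_pos ha)).comp b
      (((hasDerivAt_id b).div_const (2 * Real.pi * I)).add_const (1 / 2))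
  rw [mul_one_div] at h
  exact h.congr_of_eventuallyEq (.of_forall (theta_eq_jacobiTheta₂ a))

lemma differentiable_theta {a : ℂ} (ha : a.re < 0) : Differentiable ℂ (theta a) :=
  fun b => (hasDerivAt_theta ha b).differentiableAt

lemma hasSum_deriv_theta {a : ℂ} (ha : a.re < 0) (b : ℂ) :
    HasSum (fun n : ℤ => (-1 : ℂ) ^ n * (n * cexp (a * n ^ 2 + b * n))) (deriv (theta a) b) := by
  rw [(hasDerivAt_theta ha b).deriv]
  refine ((hasSum_jacobiTheta₂'_term _ (im_div_pi_mul_I_pos ha)).div_const _).congr_fun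
    fun n => ?_
  rw [jacobiTheta₂'_term, ← theta_term_eq_jacobiTheta₂_term]
  field_simp [two_pi_I_ne_zero]

lemma neg_one_zpow_neg (n : ℤ) : (-1 : ℂ) ^ (-n) = (-1) ^ n := by
  rw [zpow_neg, ← inv_zpow, inv_neg_one]

lemma neg_one_zpow_mul_self (n : ℤ) : (-1 : ℂ) ^ n * (-1) ^ n = 1 := by
  rw [← mul_zpow, neg_one_mul, neg_neg, one_zpow]

lemma theta_neg (a b : ℂ) : theta a (-b) = theta a b := by
  unfold theta
  rw [← (Equiv.neg ℤ).tsum_eq]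
  refine tsum_congr fun n => ?_
  rw [Equiv.neg_apply, neg_one_zpow_neg, Int.cast_neg, neg_sq, neg_mul_neg]

lemma theta_shift (a b : ℂ) (m : ℤ) :
    theta a b = (-1) ^ m * cexp (a * m ^ 2 + b * m) * theta a (b + 2 * a * m) := by
  unfold theta
  rw [← (Equiv.addRight m).tsum_eq, ← tsum_mul_left]
  refine tsum_congr fun n => ?_
  rw [Equiv.coe_addRight, Int.cast_add, zpow_add₀ (by norm_num), mul_mul_mul_comm,
    ← Complex.exp_add, mul_comm ((-1 : ℂ) ^ n)]
  congr 2
  ring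

lemma theta_add_two_mul (a b : ℂ) : theta a (b + 2 * a) = -cexp (-a - b) * theta a b := by
  rw [theta_shift a b 1, zpow_one, ← mul_assoc, ← mul_assoc, Int.cast_one, mul_one, mul_one,
    one_pow, mul_one, mul_neg_one, neg_neg, ← Complex.exp_add]
  simp

lemma theta_add_int_mul_two_pi_I (a b : ℂ) (m : ℤ) :
    theta a (b + m * (2 * Real.pi * I)) = theta a b := by
  refine tsum_congr fun n => congrArg _ (Complex.exp_eq_exp_iff_exists_int.2 ⟨m * n, ?_⟩)
  push_cast
  ring

/-- Jacobi's function `∑ (-1)^n z^n Q^(n(n-1)/2)` with `z = exp u` and `Q = exp (2τ)`. -/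
noncomputable def jac (τ u : ℂ) : ℂ := theta τ (u - τ)

lemma jac_add_two_mul (τ u : ℂ) : jac τ (u + 2 * τ) = -cexp (-u) * jac τ u := by
  rw [jac, add_sub_right_comm, theta_add_two_mul, jac]
  congr 3
  ring

lemma jac_two_mul_sub (τ u : ℂ) : jac τ (2 * τ - u) = jac τ u := by
  rw [jac, ← theta_neg, jac]
  congr 1
  ring

lemma jac_neg (τ u : ℂ) : jac τ (-u) = -cexp (-u) * jac τ u := by
  rw [← jac_add_two_mul, ← jac_two_mul_sub, sub_neg_eq_add, add_comm]

lemma jac_add_int_mul_two_pi_I (τ u : ℂ) (m : ℤ) :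
    jac τ (u + m * (2 * Real.pi * I)) = jac τ u := by
  rw [jac, add_sub_right_comm, theta_add_int_mul_two_pi_I, jac]

lemma jac_zero (τ : ℂ) : jac τ 0 = 0 := by
  have h := jac_neg τ 0
  rw [neg_zero, Complex.exp_zero] at h
  linear_combination h / 2

lemma jac_eq_zero_of_exp_eq_one {τ u : ℂ} (h : cexp u = 1) : jac τ u = 0 := by
  obtain ⟨n, rfl⟩ := Complex.exp_eq_one_iff.1 h
  rw [← zero_add ((n : ℂ) * _), jac_add_int_mul_two_pi_I, jac_zero]

lemma jac_shift (τ u : ℂ) (n : ℤ) :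
    jac τ (u + 2 * n * τ) = (-1) ^ n * cexp (-n * u - n * (n - 1) * τ) * jac τ u := by
  unfold jac
  rw [theta_shift τ (u - τ) n, show u + 2 * n * τ - τ = u - τ + 2 * τ * n by ring,
    ← mul_assoc, mul_mul_mul_comm, neg_one_zpow_mul_self, ← Complex.exp_add,
    show -n * u - n * (n - 1) * τ + (τ * n ^ 2 + (u - τ) * n) = 0 by ring, Complex.exp_zero,
    one_mul, one_mul]

lemma exp_ne_one_of_jac_ne_zero {τ u : ℂ} (h : jac τ u ≠ 0) (n : ℤ) :
    cexp (u + 2 * n * τ) ≠ 1 := fun h1 => h <| by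
  have h2 := jac_shift τ u n
  rw [jac_eq_zero_of_exp_eq_one h1] at h2
  exact (mul_eq_zero.1 h2.symm).resolve_left
    (mul_ne_zero (zpow_ne_zero _ (by norm_num)) (Complex.exp_ne_zero _))

section Derivative

variable {τ : ℂ}

lemma differentiable_jac (hτ : τ.re < 0) : Differentiable ℂ (jac τ) :=
  (differentiable_theta hτ).comp (differentiable_id.sub_const τ)

lemma deriv_neg_exp_neg_mul_jac (hτ : τ.re < 0) (u : ℂ) :
    deriv (fun u => -cexp (-u) * jac τ u) u =
      cexp (-u) * jac τ u - cexp (-u) * deriv (jac τ) u := by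
  rw [(((hasDerivAt_neg u).cexp.fun_neg).fun_mul (differentiable_jac hτ u).hasDerivAt).deriv]
  ring

lemma deriv_jac_neg (hτ : τ.re < 0) (u : ℂ) :
    -deriv (jac τ) (-u) = cexp (-u) * jac τ u - cexp (-u) * deriv (jac τ) u := by
  rw [← deriv_neg_exp_neg_mul_jac hτ, ← funext (jac_neg τ), deriv_comp_neg]

lemma deriv_jac_add_two_mul (hτ : τ.re < 0) (u : ℂ) :
    deriv (jac τ) (u + 2 * τ) = cexp (-u) * jac τ u - cexp (-u) * deriv (jac τ) u := by
  rw [← deriv_neg_exp_neg_mul_jac hτ, ← funext (jac_add_two_mul τ), deriv_comp_add_const]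

/-- The entire function `jac τ u / (1 - exp u)`. -/
noncomputable def jacQuot (τ : ℂ) : ℂ → ℂ := removableDiv (jac τ) fun u => 1 - cexp u

lemma jacQuot_of_exp_eq_one {u : ℂ} (h : cexp u = 1) : jacQuot τ u = -deriv (jac τ) u := by
  rw [jacQuot, removableDiv, if_pos (by rw [h, sub_self])]
  simp [h, div_neg]

lemma jacQuot_of_exp_ne_one {u : ℂ} (h : cexp u ≠ 1) : jacQuot τ u = jac τ u / (1 - cexp u) :=
  if_neg (sub_ne_zero.2 h.symm)

lemma jacQuot_add_two_pi_I (τ u : ℂ) : jacQuot τ (u + 2 * Real.pi * I) = jacQuot τ u := by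
  have hj (v : ℂ) : jac τ (v + 2 * Real.pi * I) = jac τ v := by
    simpa using jac_add_int_mul_two_pi_I τ v 1
  have he : cexp (u + 2 * Real.pi * I) = cexp u := Complex.exp_periodic u
  by_cases h : cexp u = 1
  · rw [jacQuot_of_exp_eq_one h, jacQuot_of_exp_eq_one (he.trans h), ← deriv_comp_add_const,
      funext hj]
  · rw [jacQuot_of_exp_ne_one h, jacQuot_of_exp_ne_one (he.trans_ne h), hj, he]

lemma differentiable_jacQuot (hτ : τ.re < 0) : Differentiable ℂ (jacQuot τ) :=
  differentiable_removableDiv (differentiable_jac hτ) (by fun_prop) fun u hu =>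
    ⟨jac_eq_zero_of_exp_eq_one (sub_eq_zero.1 hu).symm, by simp⟩

lemma one_sub_exp_mul_jacQuot (τ u : ℂ) : (1 - cexp u) * jacQuot τ u = jac τ u := by
  by_cases h : cexp u = 1
  · rw [jac_eq_zero_of_exp_eq_one h, h, sub_self, zero_mul]
  · rw [jacQuot_of_exp_ne_one h, mul_div_cancel₀ _ (sub_ne_zero.2 (Ne.symm h))]

lemma jacQuot_zero (τ : ℂ) : jacQuot τ 0 = -deriv (jac τ) 0 :=
  jacQuot_of_exp_eq_one Complex.exp_zero

lemma jacQuot_neg (hτ : τ.re < 0) (u : ℂ) : jacQuot τ (-u) = jacQuot τ u := by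
  by_cases h : cexp u = 1
  · have h' : cexp (-u) = 1 := by rw [Complex.exp_neg, h, inv_one]
    rw [jacQuot_of_exp_eq_one h, jacQuot_of_exp_eq_one h', deriv_jac_neg hτ, h',
      jac_eq_zero_of_exp_eq_one h]
    ring
  · have h' : cexp (-u) ≠ 1 := by rwa [Complex.exp_neg, Ne, inv_eq_one]
    rw [jacQuot_of_exp_ne_one h, jacQuot_of_exp_ne_one h', jac_neg,
      div_eq_div_iff (sub_ne_zero.2 h'.symm) (sub_ne_zero.2 (Ne.symm h)), Complex.exp_neg]
    field_simp
    ring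

lemma deriv_jacQuot_zero (hτ : τ.re < 0) : deriv (jacQuot τ) 0 = 0 := by
  have h := deriv_comp_neg (jacQuot τ) 0
  rw [funext (jacQuot_neg hτ), neg_zero] at h
  linear_combination h / 2

end Derivative

/-! ### Lambert series -/

lemma half_le_norm_one_sub_exp {z : ℂ} (h : 1 ≤ |z.re|) : 1 / 2 ≤ ‖1 - cexp z‖ := by
  have hnorm := abs_norm_sub_norm_le 1 (cexp z)
  rw [norm_one, norm_exp] at hnorm
  refine le_trans (le_abs.2 ?_) hnorm
  rcases le_abs.1 h with h | h
  · right
    linarith [Real.add_one_le_exp z.re]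
  · left
    have h2 : 2 ≤ (Real.exp z.re)⁻¹ := by
      rw [← Real.exp_neg]
      linarith [Real.add_one_le_exp (-z.re)]
    linarith [(le_inv_comm₀ two_pos (Real.exp_pos z.re)).1 h2]

lemma eventually_half_le_norm_one_sub_exp {τ : ℂ} (hτ : τ.re ≠ 0) {K : Set ℂ} (hK : IsCompact K) :
    ∀ᶠ n : ℤ in cofinite, ∀ u ∈ K, 1 / 2 ≤ ‖1 - cexp (u + 2 * n * τ)‖ := by
  obtain ⟨B, hB⟩ := hK.exists_bound_of_continuousOn continuous_re.continuousOn
  have htop : Tendsto (fun n : ℤ => |(n : ℝ)|) cofinite atTop := by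
    rw [Int.cofinite_eq]
    exact (tendsto_abs_atBot_atTop.comp (tendsto_intCast_atBot_iff.2 tendsto_id)).sup
      (tendsto_abs_atTop_atTop.comp tendsto_intCast_atTop_atTop)
  filter_upwards [htop.eventually_ge_atTop ((B + 1) / |2 * τ.re|)] with n hn u hu
  have hre : (u + 2 * n * τ).re = n * (2 * τ.re) - -u.re := by
    simp
    ring
  apply half_le_norm_one_sub_exp
  rw [div_le_iff₀ (by positivity), ← abs_mul] at hn
  rw [hre]
  refine le_trans ?_ (abs_sub_abs_le_abs_sub _ _)
  rw [abs_neg]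
  linarith [hB u hu, Real.norm_eq_abs u.re]

lemma exp_two_mul_int_mul_ne_one {τ : ℂ} (hτ : τ.re ≠ 0) {n : ℤ} (hn : n ≠ 0) :
    cexp (2 * n * τ) ≠ 1 := by
  intro h
  have hre : 2 * (n : ℝ) * τ.re = 0 := by
    simpa [norm_exp, Real.exp_eq_one_iff] using congrArg norm h
  exact mul_ne_zero (mul_ne_zero two_ne_zero (Int.cast_ne_zero.2 hn)) hτ hre

/-- The terms of `lambert τ u w`. -/
noncomputable def lambertTerm (τ w : ℂ) (n : ℤ) (u : ℂ) : ℂ :=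
  (-1) ^ n * cexp (n * w + 3 * n * (n + 1) * τ) / (1 - cexp (u + 2 * n * τ))

/-- The Lambert series `∑ (-1)^n exp (n w) Q^(3n(n+1)/2) / (1 - exp u Q^n)`, `Q = exp (2τ)`.
Division by zero omits the singular term when `exp u` is a power of `Q`. -/
noncomputable def lambert (τ u w : ℂ) : ℂ := ∑' n, lambertTerm τ w n u

/-- The terms of `jacLambert τ u w`. -/
noncomputable def jacLambertTerm (τ w : ℂ) (n : ℤ) (u : ℂ) : ℂ :=
  cexp (n * (w + u) + (4 * n ^ 2 + 2 * n) * τ) * jacQuot τ (u + 2 * n * τ)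

/-- The entire function of `u` that agrees with `jac τ u * lambert τ u w` away from the poles of
the Lambert series: the quasi-periodicity of `jac` absorbs each denominator in a `jacQuot`. -/
noncomputable def jacLambert (τ u w : ℂ) : ℂ := ∑' n, jacLambertTerm τ w n u

lemma jacLambertTerm_eq {τ u w : ℂ} {n : ℤ} (h : cexp (u + 2 * n * τ) ≠ 1) :
    jacLambertTerm τ w n u = jac τ u * lambertTerm τ w n u := by
  rw [jacLambertTerm, lambertTerm, jacQuot_of_exp_ne_one h, jac_shift,
    show n * (w + u) + (4 * n ^ 2 + 2 * n) * τ =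
      (n * w + 3 * n * (n + 1) * τ) + -(-n * u - n * (n - 1) * τ) by ring,
    Complex.exp_add, Complex.exp_neg (-n * u - n * (n - 1) * τ)]
  have := Complex.exp_ne_zero (-n * u - n * (n - 1) * τ)
  field_simp

lemma jacLambert_eq {τ u : ℂ} (h : jac τ u ≠ 0) (w : ℂ) :
    jacLambert τ u w = jac τ u * lambert τ u w := by
  rw [jacLambert, lambert, ← tsum_mul_left]
  exact tsum_congr fun n => jacLambertTerm_eq (exp_ne_one_of_jac_ne_zero h n)

section Convergence

variable {τ : ℂ}

lemma re_three_mul_neg (hτ : τ.re < 0) : (3 * τ).re < 0 := by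
  simpa using mul_neg_of_pos_of_neg three_pos hτ

lemma summable_norm_exp_three_mul (hτ : τ.re < 0) (w : ℂ) :
    Summable fun n : ℤ => ‖cexp (n * w + 3 * n * (n + 1) * τ)‖ := by
  refine (hasSum_theta (re_three_mul_neg hτ) (w + 3 * τ)).summable.norm.congr fun n => ?_
  rw [norm_mul, norm_zpow, norm_neg, norm_one, one_zpow, one_mul]
  congr 2
  ring

lemma differentiable_jacLambertTerm (hτ : τ.re < 0) (w : ℂ) (n : ℤ) :
    Differentiable ℂ (jacLambertTerm τ w n) :=
  .mul (by fun_prop) ((differentiable_jacQuot hτ).comp (differentiable_id.add_const _))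

lemma exists_summable_bound_jacLambertTerm (hτ : τ.re < 0) (w : ℂ) {K : Set ℂ}
    (hK : IsCompact K) : ∃ v : ℤ → ℝ, Summable v ∧
      ∀ᶠ n : ℤ in cofinite, ∀ u ∈ K, ‖jacLambertTerm τ w n u‖ ≤ v n := by
  obtain ⟨C, hC⟩ :=
    hK.exists_bound_of_continuousOn (differentiable_jac hτ).continuous.continuousOn
  refine ⟨_, (summable_norm_exp_three_mul hτ w).mul_left (C * 2), ?_⟩
  filter_upwards [eventually_half_le_norm_one_sub_exp hτ.ne hK] with n hn u hu
  have hpos : 0 < ‖1 - cexp (u + 2 * n * τ)‖ := one_half_pos.trans_le (hn u hu)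
  have hne : cexp (u + 2 * n * τ) ≠ 1 := (sub_ne_zero.1 (norm_pos_iff.1 hpos)).symm
  rw [jacLambertTerm_eq hne, lambertTerm, norm_mul, norm_div, norm_mul, norm_zpow, norm_neg,
    norm_one, one_zpow, one_mul, div_eq_inv_mul, ← mul_assoc]
  have hinv : ‖1 - cexp (u + 2 * n * τ)‖⁻¹ ≤ 2 :=
    (inv_le_comm₀ hpos two_pos).2 (by simpa using hn u hu)
  have hC₀ : 0 ≤ C := (norm_nonneg _).trans (hC u hu)
  gcongr
  exact hC u hu

lemma summable_jacLambertTerm (hτ : τ.re < 0) (u w : ℂ) :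
    Summable fun n => jacLambertTerm τ w n u := by
  obtain ⟨v, hv, hb⟩ := exists_summable_bound_jacLambertTerm hτ w (isCompact_singleton (x := u))
  exact .of_norm_bounded_eventually hv (hb.mono fun n hn => hn u rfl)

lemma differentiable_jacLambert (hτ : τ.re < 0) (w : ℂ) :
    Differentiable ℂ fun u => jacLambert τ u w := by
  intro u
  have hK := isCompact_closedBall u 1
  obtain ⟨v, hv, hb⟩ := exists_summable_bound_jacLambertTerm hτ w hK
  exact differentiableAt_tsum_of_eventually_norm_le (differentiable_jacLambertTerm hτ w) hK
    (Metric.closedBall_mem_nhds u one_pos) hv hb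

lemma hasSum_deriv_jacLambertTerm (hτ : τ.re < 0) (u w : ℂ) :
    HasSum (fun n => deriv (jacLambertTerm τ w n) u) (deriv (fun u => jacLambert τ u w) u) := by
  have hK := isCompact_closedBall u 1
  obtain ⟨v, hv, hb⟩ := exists_summable_bound_jacLambertTerm hτ w hK
  exact hasSum_deriv_of_eventually_norm_le (differentiable_jacLambertTerm hτ w) hK
    (Metric.closedBall_mem_nhds u one_pos) hv hb

lemma jacLambert_zero (hτ : τ.re ≠ 0) (w : ℂ) : jacLambert τ 0 w = jacQuot τ 0 := by
  rw [jacLambert, tsum_eq_single 0 fun n hn => ?_, jacLambertTerm]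
  · simp
  · rw [jacLambertTerm_eq (by rw [zero_add]; exact exp_two_mul_int_mul_ne_one hτ hn), jac_zero,
      zero_mul]

lemma deriv_jacLambertTerm_zero (hτ : τ.re < 0) (w : ℂ) (n : ℤ) :
    deriv (jacLambertTerm τ w n) 0 = deriv (jac τ) 0 * lambertTerm τ w n 0 := by
  rcases eq_or_ne n 0 with rfl | hn
  · have h : jacLambertTerm τ w 0 = jacQuot τ := funext fun u => by simp [jacLambertTerm]
    rw [h, deriv_jacQuot_zero hτ]
    simp [lambertTerm]
  have hne : cexp (0 + 2 * n * τ) ≠ 1 := by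
    rw [zero_add]
    exact exp_two_mul_int_mul_ne_one hτ.ne hn
  have hev : jacLambertTerm τ w n =ᶠ[𝓝 0] fun u => jac τ u * lambertTerm τ w n u :=
    (ContinuousAt.eventually_ne (g := fun u : ℂ => cexp (u + 2 * n * τ)) (by fun_prop) hne).mono
      fun u hu => jacLambertTerm_eq hu
  have hd : DifferentiableAt ℂ (lambertTerm τ w n) 0 :=
    .div (by fun_prop) (by fun_prop) (sub_ne_zero.2 hne.symm)
  rw [hev.deriv_eq, deriv_fun_mul (differentiable_jac hτ 0) hd, jac_zero, zero_mul, add_zero]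

lemma deriv_jacLambert_zero (hτ : τ.re < 0) (w : ℂ) :
    deriv (fun u => jacLambert τ u w) 0 = deriv (jac τ) 0 * lambert τ 0 w := by
  rw [← (hasSum_deriv_jacLambertTerm hτ 0 w).tsum_eq, lambert, ← tsum_mul_left]
  exact tsum_congr (deriv_jacLambertTerm_zero hτ w)

end Convergence

lemma jacLambert_add_two_pi_I (τ u w : ℂ) :
    jacLambert τ (u + 2 * Real.pi * I) w = jacLambert τ u w := by
  refine tsum_congr fun n => ?_
  rw [jacLambertTerm, jacLambertTerm, add_right_comm u, jacQuot_add_two_pi_I]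
  congr 1
  exact Complex.exp_eq_exp_iff_exists_int.2 ⟨n, by ring⟩

lemma jacLambert_add_two_mul_shift (τ u w : ℂ) :
    jacLambert τ (u + 2 * τ) w = cexp (-u - w) * jacLambert τ u (w - 6 * τ) := by
  rw [jacLambert, jacLambert, ← (Equiv.subRight (1 : ℤ)).tsum_eq, ← tsum_mul_left]
  refine tsum_congr fun n => ?_
  rw [Equiv.subRight_apply, jacLambertTerm, jacLambertTerm, Int.cast_sub, Int.cast_one,
    ← mul_assoc, ← Complex.exp_add]
  congr 2 <;> ring

lemma lambert_add_two_mul_shift (τ u w : ℂ) :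
    lambert τ (u + 2 * τ) w = -cexp (-w) * lambert τ u (w - 6 * τ) := by
  rw [lambert, lambert, ← (Equiv.subRight (1 : ℤ)).tsum_eq, ← tsum_mul_left]
  refine tsum_congr fun n => ?_
  rw [Equiv.subRight_apply, lambertTerm, lambertTerm, Int.cast_sub, Int.cast_one,
    zpow_sub_one₀ (by norm_num), inv_neg_one, mul_neg_one, neg_mul, neg_mul, mul_div_assoc',
    mul_left_comm, ← Complex.exp_add, neg_div]
  congr 4 <;> ring

/-- The geometric factorisation `x³ - 1 = (x - 1)(1 + x + x²)` at `x = exp (u + 2nτ)` cancels the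
denominators, leaving three theta terms. -/
lemma jacLambertTerm_sub_six_mul (τ u w : ℂ) (n : ℤ) :
    jacLambertTerm τ (w - 6 * τ) n u = cexp (3 * u) * jacLambertTerm τ w n u + jac τ u *
      ((-1) ^ n * cexp (3 * τ * n ^ 2 + (w - 3 * τ) * n) +
        cexp u * ((-1) ^ n * cexp (3 * τ * n ^ 2 + (w - τ) * n)) +
        cexp (2 * u) * ((-1) ^ n * cexp (3 * τ * n ^ 2 + (w + τ) * n))) := by
  have hquot := one_sub_exp_mul_jacQuot τ (u + 2 * n * τ)
  rw [jac_shift] at hquot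
  have hE : ∀ a b : ℂ, cexp (a + b) = cexp a * cexp b := Complex.exp_add
  rw [jacLambertTerm, jacLambertTerm]
  set K := jacQuot τ (u + 2 * n * τ)
  set x := cexp (u + 2 * n * τ) with hx
  set A := cexp (n * (w + u) + (4 * n ^ 2 + 2 * n) * τ) with hA
  set B := cexp (-n * u - n * (n - 1) * τ) with hB
  set D := cexp (-6 * n * τ)
  have hleft : cexp (n * (w - 6 * τ + u) + (4 * n ^ 2 + 2 * n) * τ) = A * D := by
    rw [hA, ← hE]; congr 1; ring
  have hcube : cexp (3 * u) = x ^ 3 * D := by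
    rw [hx, ← Complex.exp_nat_mul, ← hE]; congr 1; push_cast; ring
  have hterm₀ : cexp (3 * τ * n ^ 2 + (w - 3 * τ) * n) = A * D * B := by
    rw [hA, hB, ← hE, ← hE]; congr 1; ring
  have hterm₁ : cexp u * cexp (3 * τ * n ^ 2 + (w - τ) * n) = A * D * B * x := by
    rw [hA, hB, hx, ← hE, ← hE, ← hE, ← hE]; congr 1; ring
  have hterm₂ : cexp (2 * u) * cexp (3 * τ * n ^ 2 + (w + τ) * n) = A * D * B * x ^ 2 := by
    rw [hA, hB, hx, ← Complex.exp_nat_mul, ← hE, ← hE, ← hE, ← hE]; congr 1; push_cast; ring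
  rw [hleft, hcube]
  linear_combination (A * D * (1 + x + x ^ 2)) * hquot -
    jac τ u * (-1) ^ n * (hterm₀ + hterm₁ + hterm₂)

lemma jacLambert_add_two_mul {τ : ℂ} (hτ : τ.re < 0) (u w : ℂ) :
    jacLambert τ (u + 2 * τ) w = cexp (2 * u - w) * jacLambert τ u w +
      jac τ u * cexp (-w - u) *
        (theta (3 * τ) (w - 3 * τ) + cexp u * theta (3 * τ) (w - τ) +
          cexp (2 * u) * theta (3 * τ) (-w - τ)) := by
  have hθ := hasSum_theta (re_three_mul_neg hτ)
  have hsum : jacLambert τ u (w - 6 * τ) = cexp (3 * u) * jacLambert τ u w + jac τ u *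
      (theta (3 * τ) (w - 3 * τ) + cexp u * theta (3 * τ) (w - τ) +
        cexp (2 * u) * theta (3 * τ) (w + τ)) :=
    ((((summable_jacLambertTerm hτ u w).hasSum.mul_left _).add
      ((((hθ _).add ((hθ _).mul_left _)).add ((hθ _).mul_left _)).mul_left _)).congr_fun
      (jacLambertTerm_sub_six_mul τ u w)).tsum_eq
  rw [jacLambert_add_two_mul_shift, hsum, mul_add, ← mul_assoc, ← Complex.exp_add,
    show -w - τ = -(w + τ) by ring, theta_neg, show -u - w + 3 * u = 2 * u - w by ring,
    show -u - w = -w - u by ring]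
  ring

/-! ### The Lambert series identity -/

/-- The multiplier of `lambert τ u 0` in the three-term identity `lambert_add_lambert_sub`; it
makes the left-hand side, multiplied by its denominators, doubly periodic in `u`. -/
noncomputable def lambertCoeff (τ s : ℂ) : ℂ :=
  (cexp (2 * s) * theta (3 * τ) (-3 * s - τ) + cexp s * theta (3 * τ) (3 * s - τ)) /
    theta (3 * τ) (-τ)

/-- The left-hand side of the three-term identity `lambert_add_lambert_sub` multiplied by
`jac τ u * jac τ (u + s) * jac τ (u - s)`, as an entire function of `u`. -/
noncomputable def lambertComb (τ s u : ℂ) : ℂ :=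
  jac τ u * jac τ (u + s) * jacLambert τ (u - s) (-3 * s) +
    cexp (3 * s) * (jac τ u * jac τ (u - s) * jacLambert τ (u + s) (3 * s)) -
    lambertCoeff τ s * (jac τ (u - s) * jac τ (u + s) * jacLambert τ u 0)

lemma exp_mul_theta_neg_sub (a w : ℂ) : cexp w * theta a (-w - a) = -theta a (w - a) := by
  rw [← theta_neg a (w - a), show -(w - a) = -w - a + 2 * a by ring, theta_add_two_mul,
    show -a - (-w - a) = w by ring]
  ring

lemma theta_neg_self (a : ℂ) : theta a (-a) = 0 := by
  have h := exp_mul_theta_neg_sub a 0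
  rw [Complex.exp_zero, neg_zero, zero_sub] at h
  linear_combination h / 2

section

variable {τ : ℂ}

lemma jac_mul_jac_mul_jacLambert_add_two_mul (hτ : τ.re < 0) {x y z w : ℂ}
    (h : x + y = 2 * z - w) :
    jac τ (x + 2 * τ) * jac τ (y + 2 * τ) * jacLambert τ (z + 2 * τ) w =
      jac τ x * jac τ y * jacLambert τ z w + jac τ x * jac τ y * jac τ z *
        (cexp (-3 * z) * theta (3 * τ) (w - 3 * τ) + cexp (-2 * z) * theta (3 * τ) (w - τ) +
          cexp (-z) * theta (3 * τ) (-w - τ)) := by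
  have h₀ : cexp (-x) * cexp (-y) * cexp (2 * z - w) = 1 := by
    rw [← Complex.exp_add, ← Complex.exp_add, ← h, ← neg_add, neg_add_cancel, Complex.exp_zero]
  have h₁ : cexp (-x) * cexp (-y) * cexp (-w - z) = cexp (-3 * z) := by
    rw [← Complex.exp_add, ← Complex.exp_add]
    congr 1
    linear_combination -h
  have h₂ : cexp (-3 * z) * cexp z = cexp (-2 * z) := by
    rw [← Complex.exp_add]
    ring_nf
  have h₃ : cexp (-3 * z) * cexp (2 * z) = cexp (-z) := by
    rw [← Complex.exp_add]
    ring_nf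
  rw [jac_add_two_mul, jac_add_two_mul, jacLambert_add_two_mul hτ, ← h₂, ← h₃, ← h₁]
  linear_combination jac τ x * jac τ y * jacLambert τ z w * h₀

lemma lambertComb_add_two_mul (hτ : τ.re < 0) (hθ : theta (3 * τ) (-τ) ≠ 0) (s u : ℂ) :
    lambertComb τ s (u + 2 * τ) = lambertComb τ s u := by
  have hcoeff : lambertCoeff τ s * theta (3 * τ) (-τ) =
      cexp (2 * s) * theta (3 * τ) (-3 * s - τ) + cexp s * theta (3 * τ) (3 * s - τ) :=
    div_mul_cancel₀ _ hθ
  have hodd := exp_mul_theta_neg_sub (3 * τ) (3 * s)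
  have h₁ := jac_mul_jac_mul_jacLambert_add_two_mul hτ
    (show u + (u + s) = 2 * (u - s) - (-3 * s) by ring)
  have h₂ := jac_mul_jac_mul_jacLambert_add_two_mul hτ
    (show u + (u - s) = 2 * (u + s) - 3 * s by ring)
  have h₃ := jac_mul_jac_mul_jacLambert_add_two_mul hτ (show u - s + (u + s) = 2 * u - 0 by ring)
  rw [show -3 * (u - s) = -3 * u + 3 * s by ring, show -2 * (u - s) = -2 * u + 2 * s by ring,
    show -(u - s) = -u + s by ring, show -(-3 * s) - τ = 3 * s - τ by ring] at h₁
  rw [show -3 * (u + s) = -3 * u - 3 * s by ring, show -2 * (u + s) = -2 * u + s - 3 * s by ring,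
    show -(u + s) = -u + 2 * s - 3 * s by ring, show -(3 * s) - τ = -3 * s - τ by ring] at h₂
  rw [neg_zero, zero_sub, zero_sub, theta_neg_self] at h₃
  rw [neg_mul_eq_neg_mul] at hodd
  simp only [Complex.exp_add, Complex.exp_sub] at h₁ h₂
  have hs := mul_inv_cancel₀ (Complex.exp_ne_zero (3 * s))
  rw [lambertComb, lambertComb, add_right_comm u, add_sub_right_comm u, h₁, h₂, h₃]
  linear_combination jac τ u * jac τ (u + s) * jac τ (u - s) *
    (cexp (-3 * u) * hodd - (cexp (-2 * u) + cexp (-u)) * hcoeff +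
      (cexp (-3 * u) * theta (3 * τ) (3 * s - 3 * τ) +
        cexp (-2 * u) * cexp s * theta (3 * τ) (3 * s - τ) +
        cexp (-u) * cexp (2 * s) * theta (3 * τ) (-3 * s - τ)) * hs)

lemma differentiable_lambertComb (hτ : τ.re < 0) (s : ℂ) : Differentiable ℂ (lambertComb τ s) := by
  have hj := differentiable_jac hτ
  have hj₁ : Differentiable ℂ fun u => jac τ (u + s) := hj.comp (differentiable_id.add_const s)
  have hj₂ : Differentiable ℂ fun u => jac τ (u - s) := hj.comp (differentiable_id.sub_const s)
  have hl₁ : Differentiable ℂ fun u => jacLambert τ (u + s) (3 * s) :=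
    (differentiable_jacLambert hτ _).comp (differentiable_id.add_const s)
  have hl₂ : Differentiable ℂ fun u => jacLambert τ (u - s) (-3 * s) :=
    (differentiable_jacLambert hτ _).comp (differentiable_id.sub_const s)
  exact (((hj.mul hj₁).mul hl₂).add (((hj.mul hj₂).mul hl₁).const_mul _)).sub
    (((hj₂.mul hj₁).mul (differentiable_jacLambert hτ 0)).const_mul _)

lemma lambertComb_eq_lambertComb (hτ : τ.re < 0) (hθ : theta (3 * τ) (-τ) ≠ 0) (s u v : ℂ) :
    lambertComb τ s u = lambertComb τ s v := by
  refine apply_eq_apply_of_doubly_periodic (differentiable_lambertComb hτ s)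
    (by simpa using hτ.ne) (lambertComb_add_two_mul hτ hθ s) (fun u => ?_) u v
  have hj : ∀ v, jac τ (v + 2 * Real.pi * I) = jac τ v := fun v => by
    simpa using jac_add_int_mul_two_pi_I τ v 1
  rw [lambertComb, lambertComb, add_right_comm u, add_sub_right_comm u]
  simp only [hj, jacLambert_add_two_pi_I]

lemma lambertComb_self (hτ : τ.re ≠ 0) (s : ℂ) :
    lambertComb τ s s = jac τ s * jac τ (2 * s) * jacQuot τ 0 := by
  rw [lambertComb, sub_self, jac_zero, jacLambert_zero hτ, ← two_mul]
  ring

lemma lambertCoeff_eq_div (hτ : τ.re < 0) (hθ : theta (3 * τ) (-τ) ≠ 0) (hκ : jacQuot τ 0 ≠ 0)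
    {s : ℂ} (hs : jac τ s ≠ 0) : lambertCoeff τ s = cexp s * jac τ (2 * s) / jac τ s := by
  have h := lambertComb_eq_lambertComb hτ hθ s 0 s
  rw [lambertComb_self hτ.ne, lambertComb, jac_zero, zero_sub, zero_add, jac_neg,
    jacLambert_zero hτ.ne, Complex.exp_neg] at h
  rw [eq_div_iff hs]
  apply mul_left_cancel₀ (mul_ne_zero hκ hs)
  linear_combination cexp s * h - lambertCoeff τ s * jac τ s ^ 2 * jacQuot τ 0 *
    mul_inv_cancel₀ (Complex.exp_ne_zero s)

lemma lambert_add_lambert_sub (hτ : τ.re < 0) (hθ : theta (3 * τ) (-τ) ≠ 0) {s u : ℂ}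
    (h₀ : jac τ u ≠ 0) (h₁ : jac τ (u + s) ≠ 0) (h₂ : jac τ (u - s) ≠ 0) :
    lambert τ (u - s) (-3 * s) + cexp (3 * s) * lambert τ (u + s) (3 * s) -
        lambertCoeff τ s * lambert τ u 0 =
      jacQuot τ 0 * jac τ s * jac τ (2 * s) / (jac τ u * jac τ (u + s) * jac τ (u - s)) := by
  have h := lambertComb_eq_lambertComb hτ hθ s u s
  rw [lambertComb_self hτ.ne, lambertComb, jacLambert_eq h₀, jacLambert_eq h₁,
    jacLambert_eq h₂] at h
  rw [eq_div_iff (by positivity)]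
  linear_combination h

lemma deriv_lambertComb_eq_zero (hτ : τ.re < 0) (hθ : theta (3 * τ) (-τ) ≠ 0) (s u : ℂ) :
    ((deriv (jac τ) u * jac τ (u + s) + jac τ u * deriv (jac τ) (u + s)) *
        jacLambert τ (u - s) (-3 * s) +
      jac τ u * jac τ (u + s) * deriv (fun v => jacLambert τ v (-3 * s)) (u - s)) +
    cexp (3 * s) * ((deriv (jac τ) u * jac τ (u - s) + jac τ u * deriv (jac τ) (u - s)) *
        jacLambert τ (u + s) (3 * s) +
      jac τ u * jac τ (u - s) * deriv (fun v => jacLambert τ v (3 * s)) (u + s)) -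
    lambertCoeff τ s * ((deriv (jac τ) (u - s) * jac τ (u + s) +
        jac τ (u - s) * deriv (jac τ) (u + s)) * jacLambert τ u 0 +
      jac τ (u - s) * jac τ (u + s) * deriv (fun v => jacLambert τ v 0) u) = 0 := by
  have hj := fun v => (differentiable_jac hτ v).hasDerivAt
  have hl := fun w v => (differentiable_jacLambert hτ w v).hasDerivAt
  have hj₁ := (hj (u + s)).comp_add_const u s
  have hj₂ := (hj (u - s)).comp_sub_const u s
  have hl₁ := (hl (3 * s) (u + s)).comp_add_const u s
  have hl₂ := (hl (-3 * s) (u - s)).comp_sub_const u s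
  have hderiv : HasDerivAt (lambertComb τ s) _ u :=
    ((((hj u).mul hj₁).mul hl₂).add ((((hj u).mul hj₂).mul hl₁).const_mul (cexp (3 * s)))).sub
      (((hj₂.mul hj₁).mul (hl 0 u)).const_mul (lambertCoeff τ s))
  have hconst : lambertComb τ s = fun _ => lambertComb τ s 0 :=
    funext fun v => lambertComb_eq_lambertComb hτ hθ s v 0
  rw [hconst] at hderiv
  exact hderiv.unique (hasDerivAt_const u _)

lemma deriv_jac_zero (τ : ℂ) : deriv (jac τ) 0 = -jacQuot τ 0 := by
  rw [jacQuot_zero, neg_neg]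

/-- The limiting case `u = s` of `lambert_add_lambert_sub`. -/
lemma lambert_zero_add_lambert_two_mul_sub (hτ : τ.re < 0) (hθ : theta (3 * τ) (-τ) ≠ 0)
    (hκ : jacQuot τ 0 ≠ 0) {s : ℂ} (h₁ : jac τ s ≠ 0) (h₂ : jac τ (2 * s) ≠ 0) :
    lambert τ 0 (-3 * s) + cexp (3 * s) * lambert τ (2 * s) (3 * s) -
        lambertCoeff τ s * lambert τ s 0 =
      logDeriv (jac τ) s + logDeriv (jac τ) (2 * s) := by
  have h := deriv_lambertComb_eq_zero hτ hθ s s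
  rw [sub_self, ← two_mul, jacLambert_zero hτ.ne, deriv_jacLambert_zero hτ, jac_zero,
    jacLambert_eq h₁, jacLambert_eq h₂, deriv_jac_zero] at h
  rw [logDeriv_apply, logDeriv_apply, div_add_div _ _ h₁ h₂, eq_div_iff (mul_ne_zero h₁ h₂)]
  apply mul_left_cancel₀ hκ
  linear_combination -h

lemma logDeriv_jac_add_two_mul (hτ : τ.re < 0) {u : ℂ} (hu : jac τ u ≠ 0) :
    logDeriv (jac τ) (u + 2 * τ) = logDeriv (jac τ) u - 1 := by
  have := Complex.exp_ne_zero (-u)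
  rw [logDeriv_apply, logDeriv_apply, deriv_jac_add_two_mul hτ, jac_add_two_mul]
  field_simp
  ring

lemma logDeriv_jac_two_mul_sub (τ u : ℂ) :
    logDeriv (jac τ) (2 * τ - u) = -logDeriv (jac τ) u := by
  have h := deriv_comp_const_sub (2 * τ) (f := jac τ) u
  simp only [jac_two_mul_sub] at h
  rw [logDeriv_apply, logDeriv_apply, jac_two_mul_sub, h, neg_div, neg_neg]

lemma jacLambert_two_mul (hτ : τ.re ≠ 0) (w : ℂ) :
    jacLambert τ (2 * τ) w = cexp (-w) * jacQuot τ 0 := by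
  rw [← zero_add (2 * τ), jacLambert_add_two_mul_shift, jacLambert_zero hτ, neg_zero, zero_sub]

lemma deriv_jacLambert_two_mul (hτ : τ.re < 0) (w : ℂ) :
    deriv (fun u => jacLambert τ u w) (2 * τ) =
      -cexp (-w) * jacQuot τ 0 + jacQuot τ 0 * lambert τ (2 * τ) w := by
  have hexp : HasDerivAt (fun v => cexp (-v - w)) (cexp (-0 - w) * -1) 0 :=
    ((hasDerivAt_neg (0 : ℂ)).sub_const w).cexp
  have h := (hexp.mul (differentiable_jacLambert hτ (w - 6 * τ) 0).hasDerivAt).deriv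
  have hshift : (fun v => cexp (-v - w)) * (fun u => jacLambert τ u (w - 6 * τ)) =
      fun v => jacLambert τ (v + 2 * τ) w :=
    funext fun v => (jacLambert_add_two_mul_shift τ v w).symm
  rw [hshift, deriv_comp_add_const (fun u => jacLambert τ u w), zero_add, jacLambert_zero hτ.ne,
    deriv_jacLambert_zero hτ, deriv_jac_zero, neg_zero, zero_sub] at h
  have hlambert := lambert_add_two_mul_shift τ 0 w
  rw [zero_add] at hlambert
  rw [h, hlambert]
  ring

/-- The limiting case `u = 2τ - s` of `lambert_add_lambert_sub`. -/
lemma lambert_two_mul_sub_add_lambert_two_mul_sub (hτ : τ.re < 0)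
    (hθ : theta (3 * τ) (-τ) ≠ 0) (hκ : jacQuot τ 0 ≠ 0) {s : ℂ} (h₁ : jac τ s ≠ 0)
    (h₂ : jac τ (2 * s) ≠ 0) :
    lambert τ (2 * τ - 2 * s) (-3 * s) + cexp (3 * s) * lambert τ (2 * τ) (3 * s) -
        lambertCoeff τ s * lambert τ (2 * τ - s) 0 =
      1 + logDeriv (jac τ) s + logDeriv (jac τ) (2 * s) := by
  have h := deriv_lambertComb_eq_zero hτ hθ s (2 * τ - s)
  have hderiv : deriv (jac τ) (2 * τ) = jacQuot τ 0 := by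
    rw [← zero_add (2 * τ), deriv_jac_add_two_mul hτ, jac_zero, jacQuot_zero]
    simp
  have hzero : jac τ (2 * τ) = 0 := by rw [← sub_zero (2 * τ), jac_two_mul_sub, jac_zero]
  have h₁' : jac τ (2 * τ - s) ≠ 0 := by rwa [jac_two_mul_sub]
  have h₂' : jac τ (2 * τ - 2 * s) ≠ 0 := by rwa [jac_two_mul_sub]
  rw [sub_add_cancel, show 2 * τ - s - s = 2 * τ - 2 * s by ring, jacLambert_two_mul hτ.ne,
    deriv_jacLambert_two_mul hτ, hderiv, hzero, jacLambert_eq h₁', jacLambert_eq h₂'] at h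
  have hlog₁ := logDeriv_jac_two_mul_sub τ s
  have hlog₂ := logDeriv_jac_two_mul_sub τ (2 * s)
  rw [logDeriv_apply, div_eq_iff h₁'] at hlog₁
  rw [logDeriv_apply, div_eq_iff h₂'] at hlog₂
  have hexp : cexp (3 * s) * cexp (-(3 * s)) = 1 := by
    rw [← Complex.exp_add, add_neg_cancel, Complex.exp_zero]
  rw [hlog₁, hlog₂] at h
  apply mul_left_cancel₀ (mul_ne_zero hκ (mul_ne_zero h₁' h₂'))
  linear_combination h + jacQuot τ 0 * jac τ (2 * τ - s) * jac τ (2 * τ - 2 * s) *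
    (1 + logDeriv (jac τ) s + logDeriv (jac τ) (2 * s)) * hexp

end

/-! ### The three-term relation -/

lemma bijective_sumElim_add_sub : Function.Bijective
    (Sum.elim (fun p : ℤ × ℤ => (p.1 + p.2, p.1 - p.2))
      (fun p : ℤ × ℤ => (p.1 + p.2 + 1, p.1 - p.2))) := by
  constructor
  · rintro (⟨s, t⟩ | ⟨s, t⟩) (⟨s', t'⟩ | ⟨s', t'⟩) h <;>
      simp only [Sum.elim_inl, Sum.elim_inr, Prod.mk.injEq, Sum.inl.injEq, Sum.inr.injEq,
        reduceCtorEq] at h ⊢ <;> lia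
  · rintro ⟨n, m⟩
    rcases Int.emod_two_eq_zero_or_one (n + m) with h | h
    · exact ⟨.inl ((n + m) / 2, (n - m) / 2), by
        simp only [Sum.elim_inl, Prod.mk.injEq]; lia⟩
    · exact ⟨.inr ((n + m) / 2, (n - m) / 2), by
        simp only [Sum.elim_inr, Prod.mk.injEq]; lia⟩

lemma hasSum_of_hasSum_add_sub {M : Type*} [AddCommMonoid M] [TopologicalSpace M]
    [ContinuousAdd M] {f : ℤ × ℤ → M} {a b : M}
    (h₁ : HasSum (fun p : ℤ × ℤ => f (p.1 + p.2, p.1 - p.2)) a)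
    (h₂ : HasSum (fun p : ℤ × ℤ => f (p.1 + p.2 + 1, p.1 - p.2)) b) : HasSum f (a + b) := by
  rw [← (Equiv.ofBijective _ bijective_sumElim_add_sub).hasSum_iff]
  exact HasSum.sum h₁ h₂

lemma neg_one_zpow_add_mul_neg_one_zpow_sub (s t : ℤ) :
    (-1 : ℂ) ^ (s + t) * (-1) ^ (s - t) = 1 := by
  rw [← zpow_add₀ (by norm_num), show s + t + (s - t) = s + s by ring, zpow_add₀ (by norm_num),
    neg_one_zpow_mul_self]

lemma hasSum_theta_add_pi_mul_I {a : ℂ} (ha : a.re < 0) (b : ℂ) :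
    HasSum (fun n : ℤ => cexp (a * n ^ 2 + b * n)) (theta a (b + Real.pi * I)) := by
  refine (hasSum_theta ha _).congr_fun fun n => ?_
  rw [add_mul, ← add_assoc, Complex.exp_add (a * n ^ 2 + b * n), mul_comm (Real.pi * I : ℂ),
    Complex.exp_int_mul, Complex.exp_pi_mul_I, mul_left_comm, neg_one_zpow_mul_self, mul_one]

lemma hasSum_mul_of_hasSum {ι κ : Type*} {f : ι → ℂ} {g : κ → ℂ} {a b : ℂ} (hf : HasSum f a)
    (hg : HasSum g b) : HasSum (fun p : ι × κ => f p.1 * g p.2) (a * b) :=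
  hf.mul hg (summable_mul_of_summable_norm hf.summable.norm hg.summable.norm)

section

variable {τ : ℂ}

/-- Rearranging the double series by the parity of the sum of the two indices separates the
variables `a` and `b`. -/
lemma jac_add_mul_jac_sub (hτ : τ.re < 0) (a b : ℂ) :
    jac τ (a + b) * jac τ (a - b) =
      theta (2 * τ) (2 * a - 2 * τ + Real.pi * I) * theta (2 * τ) (2 * b + Real.pi * I) -
        cexp a * theta (2 * τ) (2 * a + Real.pi * I) *
          (cexp b * theta (2 * τ) (2 * b + 2 * τ + Real.pi * I)) := by
  have hτ₂ : (2 * τ).re < 0 := by simpa using mul_neg_of_pos_of_neg two_pos hτ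
  have hprod := fun b c => hasSum_mul_of_hasSum (hasSum_theta_add_pi_mul_I hτ₂ b)
    (hasSum_theta_add_pi_mul_I hτ₂ c)
  have hjac : ∀ u, HasSum (fun n : ℤ => (-1 : ℂ) ^ n * cexp (τ * n ^ 2 + (u - τ) * n))
      (jac τ u) := fun u => hasSum_theta hτ (u - τ)
  have hE : ∀ a b : ℂ, cexp (a + b) = cexp a * cexp b := Complex.exp_add
  rw [(hasSum_mul_of_hasSum (hjac (a + b)) (hjac (a - b))).unique (hasSum_of_hasSum_add_sub
    ((hprod (2 * a - 2 * τ) (2 * b)).congr_fun fun p => ?_)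
    (((hprod (2 * a) (2 * b + 2 * τ)).mul_left (-(cexp a * cexp b))).congr_fun fun p => ?_))]
  · ring
  · dsimp only
    rw [mul_mul_mul_comm, neg_one_zpow_add_mul_neg_one_zpow_sub, one_mul, ← hE, ← hE]
    congr 1
    push_cast
    ring
  · dsimp only
    rw [zpow_add_one₀ (by norm_num), mul_neg_one, neg_mul, neg_mul, mul_mul_mul_comm,
      neg_one_zpow_add_mul_neg_one_zpow_sub, one_mul, neg_mul, ← hE, ← hE, ← hE, ← hE]
    congr 2
    push_cast
    ring

lemma exists_jac_add_mul_jac_sub (hτ : τ.re < 0) : ∃ f g : ℂ → ℂ, ∀ a b,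
    jac τ (a + b) * jac τ (a - b) = cexp a * (f a * g b - g a * f b) := by
  refine ⟨fun b => cexp b * theta (2 * τ) (2 * b + 2 * τ + Real.pi * I),
    fun b => theta (2 * τ) (2 * b + Real.pi * I), fun a b => ?_⟩
  have hshift : theta (2 * τ) (2 * a - 2 * τ + Real.pi * I) =
      cexp a * cexp a * theta (2 * τ) (2 * a + 2 * τ + Real.pi * I) := by
    rw [show 2 * a + 2 * τ + Real.pi * I = 2 * a - 2 * τ + Real.pi * I + 2 * (2 * τ) by ring,
      theta_add_two_mul, ← mul_assoc, mul_neg, ← Complex.exp_add, ← Complex.exp_add,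
      show a + a + (-(2 * τ) - (2 * a - 2 * τ + Real.pi * I)) = -(Real.pi * I) by ring,
      Complex.exp_neg, Complex.exp_pi_mul_I]
    norm_num
  rw [jac_add_mul_jac_sub hτ, hshift]
  ring

lemma jac_three_term (hτ : τ.re < 0) (a c d : ℂ) :
    jac τ a ^ 2 * (jac τ (c + d) * jac τ (c - d)) =
      jac τ (a + c) * jac τ (a - c) * (cexp c * (jac τ d * jac τ (-d))) +
      jac τ (a + d) * jac τ (a - d) * jac τ c ^ 2 := by
  obtain ⟨f, g, h⟩ := exists_jac_add_mul_jac_sub hτ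
  have hsq : ∀ x, jac τ x ^ 2 = cexp x * (f x * g 0 - g x * f 0) := fun x => by
    rw [← h, add_zero, sub_zero, sq]
  have hneg : jac τ d * jac τ (-d) = f 0 * g d - g 0 * f d := by
    simpa using h 0 d
  rw [hsq, hsq, hneg, h, h, h]
  ring

/-- The derivative of `jac_three_term` in `d` at `d = c`. -/
lemma jacQuot_zero_mul_jac_sq_mul_jac_two_mul (hτ : τ.re < 0) {a c : ℂ} (hc : jac τ c ≠ 0)
    (h₁ : jac τ (a + c) ≠ 0) (h₂ : jac τ (a - c) ≠ 0) :
    jacQuot τ 0 * jac τ a ^ 2 * jac τ (2 * c) = jac τ (a + c) * jac τ (a - c) * jac τ c ^ 2 *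
      (1 - 2 * logDeriv (jac τ) c + logDeriv (jac τ) (a + c) - logDeriv (jac τ) (a - c)) := by
  have hj := fun v => (differentiable_jac hτ v).hasDerivAt
  have hadd : ∀ x : ℂ, HasDerivAt (fun d => jac τ (x + d)) (deriv (jac τ) (x + c)) c :=
    fun x => (hj (x + c)).comp_const_add x c
  have hsub : ∀ x : ℂ, HasDerivAt (fun d => jac τ (x - d)) (-deriv (jac τ) (x - c)) c :=
    fun x => (hj (x - c)).comp_const_sub x c
  have hneg : HasDerivAt (fun d => jac τ (-d)) (-deriv (jac τ) (-c)) c := by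
    simpa using hsub 0
  have hleft : HasDerivAt (fun d => jac τ a ^ 2 * (jac τ (c + d) * jac τ (c - d))) _ c :=
    ((hadd c).mul (hsub c)).const_mul (jac τ a ^ 2)
  have hright := ((((hj c).mul hneg).const_mul (cexp c)).const_mul
    (jac τ (a + c) * jac τ (a - c))).add (((hadd a).mul (hsub a)).mul_const (jac τ c ^ 2))
  rw [funext (jac_three_term hτ a c)] at hleft
  have h := hleft.unique hright
  rw [sub_self, jac_zero, ← two_mul, deriv_jac_neg hτ, jac_neg, deriv_jac_zero,
    Complex.exp_neg] at h
  rw [logDeriv_apply, logDeriv_apply, logDeriv_apply]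
  have hexp := Complex.exp_ne_zero c
  field_simp at h ⊢
  linear_combination h

/-! ### Nonvanishing near the cusp -/

lemma hasSum_pow_natAbs {r : ℝ} (hr₀ : 0 ≤ r) (hr₁ : r < 1) :
    HasSum (fun n : ℤ => r ^ n.natAbs) ((1 + r) / (1 - r)) := by
  have hgeom := hasSum_geometric_of_lt_one hr₀ hr₁
  rw [div_eq_inv_mul, mul_one_add]
  refine .of_nat_of_neg_add_one (hgeom.congr_fun fun n => rfl)
    ((hgeom.mul_right r).congr_fun fun n => ?_)
  rw [← pow_succ]
  congr 1

lemma hasSum_ne_zero_of_norm_le {f : ℤ → ℂ} {S : ℂ} {r : ℝ} (hS : HasSum f S) (h₀ : f 0 = 1)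
    (hr₀ : 0 ≤ r) (hr : r < 1 / 3) (hf : ∀ n, n ≠ 0 → ‖f n‖ ≤ r ^ n.natAbs) : S ≠ 0 := by
  rintro rfl
  have hbound := (hS.sub (hasSum_ite_eq 0 1)).norm_le_of_bounded
    ((hasSum_pow_natAbs hr₀ (by linarith)).sub (hasSum_ite_eq 0 1)) fun n => by
      rcases eq_or_ne n 0 with rfl | hn
      · simp [h₀]
      · simpa [hn] using hf n hn
  rw [zero_sub, norm_neg, norm_one, le_sub_iff_add_le, le_div_iff₀ (by linarith)] at hbound
  linarith

lemma exp_neg_two_lt_third : Real.exp (-2) < 1 / 3 := by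
  rw [Real.exp_neg, one_div]
  exact inv_strictAnti₀ three_pos (by linarith [Real.add_one_lt_exp (two_ne_zero (α := ℝ))])

lemma theta_ne_zero {a b : ℂ} (h : a.re + |b.re| ≤ -2) : theta a b ≠ 0 := by
  have ha : a.re < 0 := by linarith [abs_nonneg b.re]
  refine hasSum_ne_zero_of_norm_le (hasSum_theta ha b) (by simp) (Real.exp_pos _).le
    exp_neg_two_lt_third fun n hn => ?_
  rw [norm_mul, norm_zpow, norm_neg, norm_one, one_zpow, one_mul, norm_exp, ← Real.exp_nat_mul,
    Nat.cast_natAbs, Int.cast_abs]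
  apply Real.exp_le_exp.2
  have hre : (a * n ^ 2 + b * n).re = a.re * n ^ 2 + b.re * n := by
    rw [← ofReal_intCast, ← ofReal_pow, add_re, re_mul_ofReal, re_mul_ofReal]
  have hsq : |(n : ℝ)| ≤ n ^ 2 := by
    rw [← sq_abs]
    exact le_self_pow₀ (by exact_mod_cast Int.one_le_abs hn) two_ne_zero
  have hlin : b.re * n ≤ |b.re| * |(n : ℝ)| := (le_abs_self _).trans (abs_mul _ _).le
  have hquad : a.re * n ^ 2 ≤ a.re * |(n : ℝ)| := mul_le_mul_of_nonpos_left hsq ha.le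
  rw [hre]
  nlinarith [abs_nonneg (n : ℝ)]

lemma hasSum_jacQuot_zero (hτ : τ.re < 0) :
    HasSum (fun n : ℤ => (-1 : ℂ) ^ n * ((n + 1) * cexp (n * (n + 1) * τ))) (jacQuot τ 0) := by
  have h := hasSum_deriv_theta hτ (0 - τ)
  rw [← deriv_comp_sub_const, ← (Equiv.addRight (1 : ℤ)).hasSum_iff] at h
  rw [jacQuot_zero]
  refine h.neg.congr_fun fun n => ?_
  simp only [Function.comp, Equiv.coe_addRight, Int.cast_add, Int.cast_one]
  rw [zpow_add_one₀ (by norm_num), mul_neg_one, neg_mul, neg_neg]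
  congr 3
  ring

lemma abs_le_mul_add_one {n : ℤ} (hn : n ≠ -1) : |n| ≤ n * (n + 1) := by
  rcases abs_cases n with ⟨h, h'⟩ | ⟨h, h'⟩ <;> rw [h]
  · nlinarith
  · nlinarith [show n ≤ -2 by lia]

lemma jacQuot_zero_ne_zero (hτ : τ.re ≤ -3) : jacQuot τ 0 ≠ 0 := by
  refine hasSum_ne_zero_of_norm_le (hasSum_jacQuot_zero (by linarith)) (by simp)
    (Real.exp_pos _).le exp_neg_two_lt_third fun n _ => ?_
  rw [norm_mul, norm_zpow, norm_neg, norm_one, one_zpow, one_mul, norm_mul]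
  rcases eq_or_ne n (-1) with rfl | hn
  · rw [Int.cast_neg, Int.cast_one, neg_add_cancel, norm_zero, zero_mul]
    positivity
  have hlin : ‖(n : ℂ) + 1‖ ≤ Real.exp |(n : ℝ)| := by
    refine (norm_add_le _ _).trans ?_
    rw [norm_one, norm_intCast]
    exact Real.add_one_le_exp _
  have hquad : |(n : ℝ)| ≤ n * (n + 1) := by exact_mod_cast abs_le_mul_add_one hn
  have hre : (n * (n + 1) * τ).re = n * (n + 1) * τ.re := by
    rw [← ofReal_intCast, ← ofReal_one, ← ofReal_add, ← ofReal_mul, re_ofReal_mul]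
  have hexp : ‖cexp (n * (n + 1) * τ)‖ ≤ Real.exp (-3 * |(n : ℝ)|) := by
    rw [norm_exp, hre]
    apply Real.exp_le_exp.2
    nlinarith [abs_nonneg (n : ℝ)]
  calc ‖(n : ℂ) + 1‖ * ‖cexp (n * (n + 1) * τ)‖
      ≤ Real.exp |(n : ℝ)| * Real.exp (-3 * |(n : ℝ)|) := by gcongr
    _ = Real.exp (-2) ^ n.natAbs := by
      rw [← Real.exp_add, ← Real.exp_nat_mul, Nat.cast_natAbs, Int.cast_abs]
      ring_nf

end

/-! ### Dissection modulo five -/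

lemma tsum_eq_sum_tsum_mul_add {k : ℕ} [NeZero k] {f : ℤ → ℂ} (hf : Summable f) (c : ℤ) :
    ∑' n, f n = ∑ r : Fin k, ∑' m : ℤ, f (k * m + (c + r)) := by
  let e : Fin k × ℤ ≃ ℤ :=
    (Equiv.prodComm (Fin k) ℤ).trans ((Int.divModEquiv k).symm.trans (Equiv.addRight c))
  have he : ∀ p, e p = k * p.2 + (c + (p.1 : ℕ)) := fun p => by
    change p.2 * k + (p.1 : ℕ) + c = _
    ring
  have hsum : Summable fun p => f (e p) := e.summable_iff.2 hf
  rw [← e.tsum_eq, hsum.tsum_prod, tsum_fintype]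
  simp only [he]

lemma tsum_eq_sum_tsum_five_mul_add {f : ℤ → ℂ} (hf : Summable f) (c : ℤ) :
    ∑' n, f n = ∑' m, f (5 * m + (c + 0)) +
      (∑' m, f (5 * m + (c + -1)) + ∑' m, f (5 * m + (c + 1))) +
      (∑' m, f (5 * m + (c + -2)) + ∑' m, f (5 * m + (c + 2))) := by
  rw [tsum_eq_sum_tsum_mul_add (k := 5) hf (c - 2), Fin.sum_univ_five]
  have hshift : ∀ i j : ℤ, c - 2 + i = c + j → ∑' m : ℤ, f ((5 : ℕ) * m + (c - 2 + i)) =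
      ∑' m : ℤ, f (5 * m + (c + j)) := fun i j h => by rw [h]; rfl
  rw [hshift _ (-2) (by simp; ring), hshift _ (-1) (by simp; ring), hshift _ 0 (by simp),
    hshift _ 1 (by simp; ring), hshift _ 2 (by simp; ring)]
  ring

lemma neg_one_zpow_five_mul_add (m r : ℤ) : (-1 : ℂ) ^ (5 * m + r) = (-1) ^ r * (-1) ^ m := by
  rw [zpow_add₀ (by norm_num), zpow_mul, mul_comm]
  norm_num

lemma exp_eq_exp_two_mul_zpow {ℓ z : ℂ} (n : ℤ) (h : z = 2 * n * ℓ) :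
    cexp z = cexp (2 * ℓ) ^ n := by
  rw [← Complex.exp_int_mul, h]
  ring_nf

/-- Jacobi's function of nome `q^25` at the point `q^(5r)`, where `q = exp (2ℓ)`. -/
noncomputable def fifthJac (ℓ : ℂ) (r : ℤ) : ℂ := jac (25 * ℓ) (10 * r * ℓ)

/-- The theta constant `∑ (-1)^n q^(25n(3n-1)/2)`, where `q = exp (2ℓ)`. -/
noncomputable def fifthTheta (ℓ : ℂ) : ℂ := theta (3 * (25 * ℓ)) (-(25 * ℓ))

/-- The quotient of the two essentially different values of `fifthJac`. -/
noncomputable def fifthRatio (ℓ : ℂ) : ℂ := fifthJac ℓ 2 / fifthJac ℓ 1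

lemma fifthJac_five_sub (ℓ : ℂ) (r : ℤ) : fifthJac ℓ (5 - r) = fifthJac ℓ r := by
  rw [fifthJac, fifthJac, ← jac_two_mul_sub]
  push_cast
  ring_nf

lemma fifthJac_five_mul_add (ℓ : ℂ) (n r : ℤ) : fifthJac ℓ (5 * n + r) =
    (-1) ^ n * cexp (-n * (10 * r * ℓ) - n * (n - 1) * (25 * ℓ)) * fifthJac ℓ r := by
  rw [fifthJac, fifthJac, ← jac_shift]
  push_cast
  ring_nf

lemma fifthJac_three (ℓ : ℂ) : fifthJac ℓ 3 = fifthJac ℓ 2 := fifthJac_five_sub ℓ 2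

lemma fifthJac_four (ℓ : ℂ) : fifthJac ℓ 4 = fifthJac ℓ 1 := fifthJac_five_sub ℓ 1

lemma fifthJac_six (ℓ : ℂ) : fifthJac ℓ 6 = -(cexp (2 * ℓ) ^ 5)⁻¹ * fifthJac ℓ 1 := by
  rw [show (6 : ℤ) = 5 * 1 + 1 by norm_num, fifthJac_five_mul_add,
    exp_eq_exp_two_mul_zpow (-5) (by push_cast; ring), zpow_one, neg_one_mul, zpow_neg]
  rfl

section Nonvanishing

variable {ℓ : ℂ}

lemma re_twentyFive_mul (ℓ : ℂ) : (25 * ℓ).re = 25 * ℓ.re := by simp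

lemma re_twentyFive_mul_neg (hℓ : ℓ.re ≤ -1) : (25 * ℓ).re < 0 := by
  rw [re_twentyFive_mul]
  linarith

lemma fifthJac_ne_zero (hℓ : ℓ.re ≤ -1) {r : ℤ} (hr : r % 5 ≠ 0) : fifthJac ℓ r ≠ 0 := by
  rw [← Int.mul_ediv_add_emod r 5, fifthJac_five_mul_add]
  refine mul_ne_zero (mul_ne_zero (zpow_ne_zero _ (by norm_num)) (Complex.exp_ne_zero _)) ?_
  have hpos : 1 ≤ r % 5 := by omega
  have hlt : r % 5 ≤ 4 := by omega
  generalize r % 5 = i at hpos hlt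
  refine theta_ne_zero ?_
  have hre : (10 * (i : ℂ) * ℓ - 25 * ℓ).re = (10 * i - 25) * ℓ.re := by simp; ring
  have hi : |10 * (i : ℝ) - 25| ≤ 15 := by
    have h₁ : (1 : ℝ) ≤ i := by exact_mod_cast hpos
    have h₂ : (i : ℝ) ≤ 4 := by exact_mod_cast hlt
    exact abs_le.2 ⟨by linarith, by linarith⟩
  rw [re_twentyFive_mul, hre, abs_mul, abs_of_neg (by linarith : ℓ.re < 0)]
  nlinarith

lemma fifthTheta_ne_zero (hℓ : ℓ.re ≤ -1) : fifthTheta ℓ ≠ 0 := by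
  refine theta_ne_zero ?_
  have hre : (3 * (25 * ℓ)).re = 75 * ℓ.re := by simp; ring
  rw [hre, neg_re, abs_neg, re_twentyFive_mul, abs_of_neg (by linarith : 25 * ℓ.re < 0)]
  linarith

lemma fifthRatio_ne_zero (hℓ : ℓ.re ≤ -1) : fifthRatio ℓ ≠ 0 :=
  div_ne_zero (fifthJac_ne_zero hℓ (by decide)) (fifthJac_ne_zero hℓ (by decide))

lemma jacQuot_twentyFive_mul_ne_zero (hℓ : ℓ.re ≤ -1) : jacQuot (25 * ℓ) 0 ≠ 0 :=
  jacQuot_zero_ne_zero (by rw [re_twentyFive_mul]; linarith)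

lemma lambertCoeff_ten_mul (hℓ : ℓ.re ≤ -1) {r : ℤ} (hr : r % 5 ≠ 0) :
    lambertCoeff (25 * ℓ) (10 * r * ℓ) =
      cexp (10 * r * ℓ) * fifthJac ℓ (2 * r) / fifthJac ℓ r := by
  rw [lambertCoeff_eq_div (re_twentyFive_mul_neg hℓ) (fifthTheta_ne_zero hℓ)
    (jacQuot_twentyFive_mul_ne_zero hℓ) (fifthJac_ne_zero hℓ hr), fifthJac, fifthJac]
  push_cast
  ring_nf

lemma lambertCoeff_ten_mul_one (hℓ : ℓ.re ≤ -1) :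
    lambertCoeff (25 * ℓ) (10 * (1 : ℤ) * ℓ) = cexp (2 * ℓ) ^ 5 * fifthRatio ℓ := by
  rw [lambertCoeff_ten_mul hℓ (by decide), exp_eq_exp_two_mul_zpow 5 (by push_cast; ring),
    mul_div_assoc]
  rfl

lemma lambertCoeff_ten_mul_two (hℓ : ℓ.re ≤ -1) :
    lambertCoeff (25 * ℓ) (10 * (2 : ℤ) * ℓ) = cexp (2 * ℓ) ^ 10 / fifthRatio ℓ := by
  rw [lambertCoeff_ten_mul hℓ (by decide), exp_eq_exp_two_mul_zpow 10 (by push_cast; ring),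
    fifthRatio, div_div_eq_mul_div, ← fifthJac_four]
  rfl

end Nonvanishing

lemma tsum_theta_residue (a b : ℂ) (r : ℤ) :
    ∑' m : ℤ, (-1 : ℂ) ^ (5 * m + r) * cexp (a * (5 * m + r : ℤ) ^ 2 + b * (5 * m + r : ℤ)) =
      (-1) ^ r * cexp (a * r ^ 2 + b * r) * theta (25 * a) (5 * b + 10 * a * r) := by
  rw [theta, ← tsum_mul_left]
  refine tsum_congr fun m => ?_
  have hexp : a * ((5 * m + r : ℤ) : ℂ) ^ 2 + b * (5 * m + r : ℤ) =
      (a * r ^ 2 + b * r) + (25 * a * m ^ 2 + (5 * b + 10 * a * r) * m) := by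
    push_cast; ring
  rw [neg_one_zpow_five_mul_add, hexp, Complex.exp_add]
  ring

lemma tsum_theta_three_residue (ℓ : ℂ) (j : ℤ) :
    ∑' m : ℤ, (-1 : ℂ) ^ (5 * m + (-1 + j)) *
        cexp (3 * ℓ * (5 * m + (-1 + j) : ℤ) ^ 2 + ℓ * (5 * m + (-1 + j) : ℤ)) =
      -((-1) ^ j * cexp ((3 * j ^ 2 - 5 * j + 2) * ℓ) *
        theta (3 * (25 * ℓ)) (3 * (10 * j * ℓ) - 25 * ℓ)) := by
  rw [tsum_theta_residue, zpow_add₀ (by norm_num), zpow_neg_one, inv_neg_one, neg_one_mul,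
    neg_mul, neg_mul]
  push_cast
  ring_nf

lemma tsum_theta_three_residue_add {ℓ : ℂ} (hℓ : ℓ.re ≤ -1) (j : ℤ) :
    ∑' m : ℤ, (-1 : ℂ) ^ (5 * m + (-1 + -j)) *
        cexp (3 * ℓ * (5 * m + (-1 + -j) : ℤ) ^ 2 + ℓ * (5 * m + (-1 + -j) : ℤ)) +
      ∑' m : ℤ, (-1 : ℂ) ^ (5 * m + (-1 + j)) *
        cexp (3 * ℓ * (5 * m + (-1 + j) : ℤ) ^ 2 + ℓ * (5 * m + (-1 + j) : ℤ)) =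
      -((-1) ^ j * cexp ((3 * j ^ 2 - 15 * j + 2) * ℓ) *
        (lambertCoeff (25 * ℓ) (10 * j * ℓ) * fifthTheta ℓ)) := by
  have hcoeff : lambertCoeff (25 * ℓ) (10 * j * ℓ) * fifthTheta ℓ =
      cexp (2 * (10 * j * ℓ)) * theta (3 * (25 * ℓ)) (-3 * (10 * j * ℓ) - 25 * ℓ) +
        cexp (10 * j * ℓ) * theta (3 * (25 * ℓ)) (3 * (10 * j * ℓ) - 25 * ℓ) :=
    div_mul_cancel₀ _ (fifthTheta_ne_zero hℓ)
  have hexp₁ : (3 * ((-j : ℤ) : ℂ) ^ 2 - 5 * (-j : ℤ) + 2) * ℓ =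
      (3 * j ^ 2 - 15 * j + 2) * ℓ + 2 * (10 * j * ℓ) := by push_cast; ring
  have hexp₂ : (3 * (j : ℂ) ^ 2 - 5 * j + 2) * ℓ =
      (3 * j ^ 2 - 15 * j + 2) * ℓ + 10 * j * ℓ := by ring
  have harg : 3 * (10 * ((-j : ℤ) : ℂ) * ℓ) = -3 * (10 * j * ℓ) := by push_cast; ring
  rw [tsum_theta_three_residue, tsum_theta_three_residue, hcoeff, hexp₁, hexp₂, harg,
    Complex.exp_add, Complex.exp_add, neg_one_zpow_neg]
  ring

lemma theta_three_mul_eq {ℓ : ℂ} (hℓ : ℓ.re ≤ -1) : theta (3 * ℓ) ℓ =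
    fifthTheta ℓ * (fifthRatio ℓ - cexp (2 * ℓ) - cexp (2 * ℓ) ^ 2 / fifthRatio ℓ) := by
  have hq := Complex.exp_ne_zero (2 * ℓ)
  have hA := fifthRatio_ne_zero hℓ
  have hsum := (hasSum_theta (re_three_mul_neg (by linarith : ℓ.re < 0)) ℓ).summable
  have hzero : ∑' m : ℤ, (-1 : ℂ) ^ (5 * m + (-1 + 0)) *
      cexp (3 * ℓ * (5 * m + (-1 + 0) : ℤ) ^ 2 + ℓ * (5 * m + (-1 + 0) : ℤ)) =
      -(cexp (2 * ℓ) * fifthTheta ℓ) := by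
    rw [tsum_theta_three_residue, fifthTheta]
    simp
  rw [theta, tsum_eq_sum_tsum_five_mul_add hsum (-1), hzero,
    tsum_theta_three_residue_add hℓ 1, tsum_theta_three_residue_add hℓ 2,
    lambertCoeff_ten_mul_one hℓ, lambertCoeff_ten_mul_two hℓ,
    exp_eq_exp_two_mul_zpow (z := (3 * (1 : ℤ) ^ 2 - 15 * (1 : ℤ) + 2) * ℓ) (-5)
      (by push_cast; ring),
    exp_eq_exp_two_mul_zpow (z := (3 * (2 : ℤ) ^ 2 - 15 * (2 : ℤ) + 2) * ℓ) (-8)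
      (by push_cast; ring)]
  generalize cexp (2 * ℓ) = q at hq
  field_simp
  ring

/-- The function `(-1)^n q^(n(3n+1)/2 + bn) / (1 - q^(5n))` of `n`, where `q = exp (2ℓ)`. Division
by zero makes it vanish at `n = 0`. -/
noncomputable def rankLambertTerm (ℓ : ℂ) (b n : ℤ) : ℂ :=
  (-1) ^ n * cexp ((3 * n ^ 2 + n + 2 * b * n) * ℓ) / (1 - cexp (10 * n * ℓ))

/-- The bilateral series of the `rankLambertTerm`s, that is, the sum over `n ≠ 0` of
`(-1)^n q^(n(3n+1)/2 + bn) / (1 - q^(5n))`, where `q = exp (2ℓ)`. -/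
noncomputable def rankLambert (ℓ : ℂ) (b : ℤ) : ℂ := ∑' n, rankLambertTerm ℓ b n

lemma summable_rankLambert {ℓ : ℂ} (hℓ : ℓ.re < 0) (b : ℤ) : Summable (rankLambertTerm ℓ b) := by
  have h5 : (5 * ℓ).re ≠ 0 := by simpa using hℓ.ne
  refine Summable.of_norm_bounded_eventually
    ((hasSum_theta (re_three_mul_neg hℓ) ((1 + 2 * b) * ℓ)).summable.norm.mul_left 2) ?_
  filter_upwards [eventually_half_le_norm_one_sub_exp h5 (isCompact_singleton (x := 0))] with n hn
  have hden : 1 / 2 ≤ ‖1 - cexp (10 * n * ℓ)‖ := by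
    simpa only [show (0 : ℂ) + 2 * n * (5 * ℓ) = 10 * n * ℓ by ring] using hn 0 rfl
  rw [rankLambertTerm, norm_div, show (3 * (n : ℂ) ^ 2 + n + 2 * b * n) * ℓ =
    3 * ℓ * n ^ 2 + (1 + 2 * b) * ℓ * n by ring, div_le_iff₀ (by linarith)]
  nlinarith [norm_nonneg ((-1 : ℂ) ^ n * cexp (3 * ℓ * n ^ 2 + (1 + 2 * b) * ℓ * n))]

/-- The Lambert series of nome `q^25` at the point `q^(5r)` with numerators twisted by `q^(15cn)`,
where `q = exp (2ℓ)`. -/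
noncomputable def fifthLambert (ℓ : ℂ) (r c : ℤ) : ℂ := lambert (25 * ℓ) (10 * r * ℓ) (30 * c * ℓ)

lemma tsum_rankLambert_residue (ℓ : ℂ) (c j : ℤ) :
    ∑' m : ℤ, rankLambertTerm ℓ (7 - 3 * c) (5 * m + (c + j)) =
      (-1) ^ c * cexp (3 * c * (5 - c) * ℓ) *
        ((-1) ^ j * cexp (3 * j * (5 + j) * ℓ) * fifthLambert ℓ (c + j) j) := by
  rw [fifthLambert, lambert, ← tsum_mul_left, ← tsum_mul_left]
  refine tsum_congr fun m => ?_
  have hnum : (3 * ((5 * m + (c + j) : ℤ) : ℂ) ^ 2 + (5 * m + (c + j) : ℤ) +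
      2 * (7 - 3 * c : ℤ) * (5 * m + (c + j) : ℤ)) * ℓ = 3 * c * (5 - c) * ℓ +
        (3 * j * (5 + j) * ℓ + (m * (30 * j * ℓ) + 3 * m * (m + 1) * (25 * ℓ))) := by
    push_cast; ring
  have hden : 10 * ((5 * m + (c + j) : ℤ) : ℂ) * ℓ = 10 * (c + j : ℤ) * ℓ + 2 * m * (25 * ℓ) := by
    push_cast; ring
  rw [rankLambertTerm, lambertTerm, neg_one_zpow_five_mul_add, zpow_add₀ (by norm_num), hnum, hden,
    Complex.exp_add, Complex.exp_add]
  ring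

/-- The combination of Lambert series that the Lambert series identities evaluate. -/
noncomputable def fifthLambertComb (ℓ : ℂ) (c s : ℤ) : ℂ :=
  fifthLambert ℓ (c + -s) (-s) + cexp (30 * s * ℓ) * fifthLambert ℓ (c + s) s -
    lambertCoeff (25 * ℓ) (10 * s * ℓ) * fifthLambert ℓ c 0

lemma fifthLambertComb_eq (ℓ : ℂ) (c s : ℤ) : fifthLambertComb ℓ c s =
    lambert (25 * ℓ) (10 * c * ℓ - 10 * s * ℓ) (-3 * (10 * s * ℓ)) +
      cexp (3 * (10 * s * ℓ)) * lambert (25 * ℓ) (10 * c * ℓ + 10 * s * ℓ) (3 * (10 * s * ℓ)) -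
      lambertCoeff (25 * ℓ) (10 * s * ℓ) * lambert (25 * ℓ) (10 * c * ℓ) 0 := by
  rw [fifthLambertComb, fifthLambert, fifthLambert, fifthLambert]
  push_cast
  ring_nf

/-- In the residue classes modulo five the Lambert series pair off symmetrically about `c`; by the
dissection of `theta (3 * ℓ) ℓ`, the three multiples of `fifthLambert ℓ c 0` add up to a multiple
of that function. -/
lemma rankLambert_seven_sub_three_mul {ℓ : ℂ} (hℓ : ℓ.re ≤ -1) (c : ℤ) :
    rankLambert ℓ (7 - 3 * c) = (-1) ^ c * cexp (3 * c * (5 - c) * ℓ) *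
      ((cexp (2 * ℓ) ^ 9)⁻¹ * fifthLambertComb ℓ c 2 - (cexp (2 * ℓ) ^ 6)⁻¹ *
        fifthLambertComb ℓ c 1 - (cexp (2 * ℓ))⁻¹ * (theta (3 * ℓ) ℓ / fifthTheta ℓ) *
        fifthLambert ℓ c 0) := by
  have hq := Complex.exp_ne_zero (2 * ℓ)
  have hθ := fifthTheta_ne_zero hℓ
  have hA := fifthRatio_ne_zero hℓ
  have hexp : ∀ (j e : ℤ), 3 * j * (5 + j) = 2 * e →
      cexp (3 * j * (5 + j) * ℓ) = cexp (2 * ℓ) ^ e := fun j e h =>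
    exp_eq_exp_two_mul_zpow e (by rw [← Int.cast_ofNat 2, ← Int.cast_mul, ← h]; push_cast; rfl)
  rw [rankLambert, tsum_eq_sum_tsum_five_mul_add (summable_rankLambert (by linarith) _) c]
  simp only [tsum_rankLambert_residue]
  rw [theta_three_mul_eq hℓ, fifthLambertComb, fifthLambertComb, lambertCoeff_ten_mul_one hℓ,
    lambertCoeff_ten_mul_two hℓ, hexp 0 0 (by norm_num), hexp 1 9 (by norm_num),
    hexp (-1) (-6) (by norm_num), hexp 2 21 (by norm_num), hexp (-2) (-9) (by norm_num),
    exp_eq_exp_two_mul_zpow (z := 30 * (1 : ℤ) * ℓ) 15 (by push_cast; ring),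
    exp_eq_exp_two_mul_zpow (z := 30 * (2 : ℤ) * ℓ) 30 (by push_cast; ring), add_zero]
  generalize cexp (2 * ℓ) = q at hq
  field_simp
  ring

section Evaluation

variable {ℓ : ℂ}

lemma fifthLambertComb_eq_div (hℓ : ℓ.re ≤ -1) {c s : ℤ} (h₀ : c % 5 ≠ 0) (h₁ : (c + s) % 5 ≠ 0)
    (h₂ : (c - s) % 5 ≠ 0) : fifthLambertComb ℓ c s =
      jacQuot (25 * ℓ) 0 * fifthJac ℓ s * fifthJac ℓ (2 * s) /
        (fifthJac ℓ c * fifthJac ℓ (c + s) * fifthJac ℓ (c - s)) := by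
  have hadd : 10 * (c : ℂ) * ℓ + 10 * s * ℓ = 10 * (c + s : ℤ) * ℓ := by push_cast; ring
  have hsub : 10 * (c : ℂ) * ℓ - 10 * s * ℓ = 10 * (c - s : ℤ) * ℓ := by push_cast; ring
  rw [fifthLambertComb_eq, lambert_add_lambert_sub (re_twentyFive_mul_neg hℓ)
    (fifthTheta_ne_zero hℓ) (fifthJac_ne_zero hℓ h₀) (by rw [hadd]; exact fifthJac_ne_zero hℓ h₁)
    (by rw [hsub]; exact fifthJac_ne_zero hℓ h₂), hadd, hsub]
  simp only [fifthJac]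
  push_cast
  ring_nf

lemma fifthLambertComb_two_one (hℓ : ℓ.re ≤ -1) :
    fifthLambertComb ℓ 2 1 = jacQuot (25 * ℓ) 0 / fifthJac ℓ 2 := by
  have h₁ : fifthJac ℓ 1 ≠ 0 := fifthJac_ne_zero hℓ (by decide)
  have h₂ : fifthJac ℓ 2 ≠ 0 := fifthJac_ne_zero hℓ (by decide)
  rw [fifthLambertComb_eq_div hℓ (by decide) (by decide) (by decide)]
  norm_num [fifthJac_three]
  field_simp

lemma fifthLambertComb_four_two (hℓ : ℓ.re ≤ -1) :
    fifthLambertComb ℓ 4 2 = -(cexp (2 * ℓ) ^ 5 * jacQuot (25 * ℓ) 0 / fifthJac ℓ 1) := by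
  have h₁ : fifthJac ℓ 1 ≠ 0 := fifthJac_ne_zero hℓ (by decide)
  have h₂ : fifthJac ℓ 2 ≠ 0 := fifthJac_ne_zero hℓ (by decide)
  rw [fifthLambertComb_eq_div hℓ (by decide) (by decide) (by decide)]
  norm_num [fifthJac_four, fifthJac_six]
  field_simp

/-- The logarithmic derivative of Jacobi's function of nome `q^25` at the point `q^(5r)`, where
`q = exp (2ℓ)`. -/
noncomputable def fifthLogDeriv (ℓ : ℂ) (r : ℤ) : ℂ := logDeriv (jac (25 * ℓ)) (10 * r * ℓ)

lemma fifthLogDeriv_five_sub (ℓ : ℂ) (r : ℤ) : fifthLogDeriv ℓ (5 - r) = -fifthLogDeriv ℓ r := by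
  rw [fifthLogDeriv, fifthLogDeriv, ← logDeriv_jac_two_mul_sub]
  push_cast
  ring_nf

lemma fifthLogDeriv_five_add (hℓ : ℓ.re ≤ -1) {r : ℤ} (hr : r % 5 ≠ 0) :
    fifthLogDeriv ℓ (5 + r) = fifthLogDeriv ℓ r - 1 := by
  rw [fifthLogDeriv, fifthLogDeriv,
    ← logDeriv_jac_add_two_mul (re_twentyFive_mul_neg hℓ) (fifthJac_ne_zero hℓ hr)]
  push_cast
  ring_nf

lemma jacQuot_mul_fifthJac_sq_mul_fifthJac (hℓ : ℓ.re ≤ -1) {a c : ℤ} (hc : c % 5 ≠ 0)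
    (h₁ : (a + c) % 5 ≠ 0) (h₂ : (a - c) % 5 ≠ 0) :
    jacQuot (25 * ℓ) 0 * fifthJac ℓ a ^ 2 * fifthJac ℓ (2 * c) =
      fifthJac ℓ (a + c) * fifthJac ℓ (a - c) * fifthJac ℓ c ^ 2 *
        (1 - 2 * fifthLogDeriv ℓ c + fifthLogDeriv ℓ (a + c) - fifthLogDeriv ℓ (a - c)) := by
  have hadd : 10 * (a : ℂ) * ℓ + 10 * c * ℓ = 10 * (a + c : ℤ) * ℓ := by push_cast; ring
  have hsub : 10 * (a : ℂ) * ℓ - 10 * c * ℓ = 10 * (a - c : ℤ) * ℓ := by push_cast; ring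
  have hdouble : 2 * (10 * (c : ℂ) * ℓ) = 10 * (2 * c : ℤ) * ℓ := by push_cast; ring
  have h := jacQuot_zero_mul_jac_sq_mul_jac_two_mul (re_twentyFive_mul_neg hℓ)
    (a := 10 * a * ℓ) (fifthJac_ne_zero hℓ hc) (by rw [hadd]; exact fifthJac_ne_zero hℓ h₁)
    (by rw [hsub]; exact fifthJac_ne_zero hℓ h₂)
  rwa [hadd, hsub, hdouble] at h

lemma jacQuot_mul_fifthJac_two_sq_div (hℓ : ℓ.re ≤ -1) :
    jacQuot (25 * ℓ) 0 * fifthJac ℓ 2 ^ 2 / fifthJac ℓ 1 ^ 3 =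
      1 - 3 * fifthLogDeriv ℓ 1 - fifthLogDeriv ℓ 2 := by
  have h₁ : fifthJac ℓ 1 ≠ 0 := fifthJac_ne_zero hℓ (by decide)
  have h₂ : fifthJac ℓ 2 ≠ 0 := fifthJac_ne_zero hℓ (by decide)
  have h := jacQuot_mul_fifthJac_sq_mul_fifthJac hℓ (a := 2) (c := 1) (by decide) (by decide)
    (by decide)
  have hthree : fifthLogDeriv ℓ 3 = -fifthLogDeriv ℓ 2 := fifthLogDeriv_five_sub ℓ 2
  norm_num [fifthJac_three, hthree] at h
  rw [div_eq_iff (pow_ne_zero 3 h₁)]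
  apply mul_left_cancel₀ h₂
  linear_combination h

lemma jacQuot_mul_fifthJac_one_sq_div (hℓ : ℓ.re ≤ -1) :
    cexp (2 * ℓ) ^ 5 * jacQuot (25 * ℓ) 0 * fifthJac ℓ 1 ^ 2 / fifthJac ℓ 2 ^ 3 =
      3 * fifthLogDeriv ℓ 2 - fifthLogDeriv ℓ 1 := by
  have hq := Complex.exp_ne_zero (2 * ℓ)
  have h₁ : fifthJac ℓ 1 ≠ 0 := fifthJac_ne_zero hℓ (by decide)
  have h₂ : fifthJac ℓ 2 ≠ 0 := fifthJac_ne_zero hℓ (by decide)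
  have h := jacQuot_mul_fifthJac_sq_mul_fifthJac hℓ (a := 4) (c := 2) (by decide) (by decide)
    (by decide)
  have hsix : fifthLogDeriv ℓ 6 = fifthLogDeriv ℓ 1 - 1 :=
    fifthLogDeriv_five_add hℓ (r := 1) (by decide)
  norm_num [fifthJac_four, fifthJac_six, hsix] at h
  rw [div_eq_iff (pow_ne_zero 3 h₂)]
  generalize cexp (2 * ℓ) = q at *
  generalize fifthJac ℓ 1 = a at *
  generalize fifthJac ℓ 2 = b at *
  have hab : q ^ 5 * jacQuot (25 * ℓ) 0 * a ^ 2 * a =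
      a * b ^ 3 * (3 * fifthLogDeriv ℓ 2 - fifthLogDeriv ℓ 1) := by
    linear_combination q ^ 5 * h + a * b ^ 3 *
      (3 * fifthLogDeriv ℓ 2 - fifthLogDeriv ℓ 1) * mul_inv_cancel₀ (pow_ne_zero 5 hq)
  apply mul_left_cancel₀ h₁
  linear_combination hab

lemma fifthLambertComb_two_two (hℓ : ℓ.re ≤ -1) :
    fifthLambertComb ℓ 2 2 = fifthLogDeriv ℓ 2 - fifthLogDeriv ℓ 1 := by
  have hfour : fifthLogDeriv ℓ 4 = -fifthLogDeriv ℓ 1 := fifthLogDeriv_five_sub ℓ 1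
  have hdouble : 2 * (10 * ((2 : ℤ) : ℂ) * ℓ) = 10 * (4 : ℤ) * ℓ := by push_cast; ring
  rw [fifthLambertComb_eq, sub_self, ← two_mul, lambert_zero_add_lambert_two_mul_sub
    (re_twentyFive_mul_neg hℓ) (fifthTheta_ne_zero hℓ) (jacQuot_twentyFive_mul_ne_zero hℓ)
    (fifthJac_ne_zero hℓ (by decide))
    (by rw [hdouble]; exact fifthJac_ne_zero hℓ (by decide)), hdouble, ← fifthLogDeriv,
    ← fifthLogDeriv, hfour, sub_eq_add_neg]

lemma fifthLambertComb_four_one (hℓ : ℓ.re ≤ -1) :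
    fifthLambertComb ℓ 4 1 = 1 + fifthLogDeriv ℓ 1 + fifthLogDeriv ℓ 2 := by
  have hdouble : 2 * (10 * ((1 : ℤ) : ℂ) * ℓ) = 10 * (2 : ℤ) * ℓ := by push_cast; ring
  have hsub : 10 * ((4 : ℤ) : ℂ) * ℓ - 10 * (1 : ℤ) * ℓ =
      2 * (25 * ℓ) - 2 * (10 * (1 : ℤ) * ℓ) := by push_cast; ring
  have hadd : 10 * ((4 : ℤ) : ℂ) * ℓ + 10 * (1 : ℤ) * ℓ = 2 * (25 * ℓ) := by push_cast; ring
  have hfour : 10 * ((4 : ℤ) : ℂ) * ℓ = 2 * (25 * ℓ) - 10 * (1 : ℤ) * ℓ := by push_cast; ring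
  rw [fifthLambertComb_eq, hsub, hadd, hfour, lambert_two_mul_sub_add_lambert_two_mul_sub
    (re_twentyFive_mul_neg hℓ) (fifthTheta_ne_zero hℓ) (jacQuot_twentyFive_mul_ne_zero hℓ)
    (fifthJac_ne_zero hℓ (by decide))
    (by rw [hdouble]; exact fifthJac_ne_zero hℓ (by decide)), hdouble, ← fifthLogDeriv,
    ← fifthLogDeriv]

lemma rankLambert_one_dissection (hℓ : ℓ.re ≤ -1) :
    rankLambert ℓ 1 + 1 / 5 = theta (3 * ℓ) ℓ *
      (jacQuot (25 * ℓ) 0 / fifthJac ℓ 2 * fifthRatio ℓ ^ 2 / (5 * fifthTheta ℓ) +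
        cexp (2 * ℓ) * (jacQuot (25 * ℓ) 0 / fifthJac ℓ 2 * fifthRatio ℓ / (5 * fifthTheta ℓ)) +
        cexp (2 * ℓ) ^ 2 * (2 * (jacQuot (25 * ℓ) 0 / fifthJac ℓ 2) / (5 * fifthTheta ℓ)) +
        cexp (2 * ℓ) ^ 3 *
          (-(2 * (jacQuot (25 * ℓ) 0 / fifthJac ℓ 2) / (5 * fifthRatio ℓ * fifthTheta ℓ)) -
            cexp (2 * ℓ) ^ 5 * fifthLambert ℓ 2 0 / fifthTheta ℓ)) := by
  have hq := Complex.exp_ne_zero (2 * ℓ)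
  have hθ := fifthTheta_ne_zero hℓ
  have h₁ : fifthJac ℓ 1 ≠ 0 := fifthJac_ne_zero hℓ (by decide)
  have h₂ : fifthJac ℓ 2 ≠ 0 := fifthJac_ne_zero hℓ (by decide)
  have hexp : cexp (3 * (2 : ℤ) * (5 - (2 : ℤ)) * ℓ) = cexp (2 * ℓ) ^ 9 :=
    exp_eq_exp_two_mul_zpow 9 (by push_cast; ring)
  have hcomb : fifthLambertComb ℓ 2 2 + 1 / 5 =
      (jacQuot (25 * ℓ) 0 * fifthJac ℓ 2 ^ 2 / fifthJac ℓ 1 ^ 3 + 2 *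
        (cexp (2 * ℓ) ^ 5 * jacQuot (25 * ℓ) 0 * fifthJac ℓ 1 ^ 2 / fifthJac ℓ 2 ^ 3)) / 5 := by
    rw [fifthLambertComb_two_two hℓ, jacQuot_mul_fifthJac_two_sq_div hℓ,
      jacQuot_mul_fifthJac_one_sq_div hℓ]
    ring
  rw [show (1 : ℤ) = 7 - 3 * 2 by norm_num, rankLambert_seven_sub_three_mul hℓ, hexp,
    fifthLambertComb_two_one hℓ, eq_sub_of_add_eq hcomb, theta_three_mul_eq hℓ, fifthRatio]
  generalize cexp (2 * ℓ) = q at hq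
  field_simp
  ring

lemma rankLambert_neg_five_dissection (hℓ : ℓ.re ≤ -1) :
    rankLambert ℓ (-5) + 7 / 5 = theta (3 * ℓ) ℓ *
      ((2 * (jacQuot (25 * ℓ) 0 / fifthJac ℓ 1) * fifthRatio ℓ / (5 * fifthTheta ℓ) -
          cexp (2 * ℓ) ^ 5 * fifthLambert ℓ 4 0 / fifthTheta ℓ) +
        cexp (2 * ℓ) * (2 * (jacQuot (25 * ℓ) 0 / fifthJac ℓ 1) / (5 * fifthTheta ℓ)) +
        cexp (2 * ℓ) ^ 2 *
          (-(jacQuot (25 * ℓ) 0 / fifthJac ℓ 1 / (5 * fifthRatio ℓ * fifthTheta ℓ))) +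
        cexp (2 * ℓ) ^ 3 *
          (jacQuot (25 * ℓ) 0 / fifthJac ℓ 1 / (5 * fifthRatio ℓ ^ 2 * fifthTheta ℓ))) := by
  have hq := Complex.exp_ne_zero (2 * ℓ)
  have hθ := fifthTheta_ne_zero hℓ
  have h₁ : fifthJac ℓ 1 ≠ 0 := fifthJac_ne_zero hℓ (by decide)
  have h₂ : fifthJac ℓ 2 ≠ 0 := fifthJac_ne_zero hℓ (by decide)
  have hexp : cexp (3 * (4 : ℤ) * (5 - (4 : ℤ)) * ℓ) = cexp (2 * ℓ) ^ 6 :=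
    exp_eq_exp_two_mul_zpow 6 (by push_cast; ring)
  have hcomb : fifthLambertComb ℓ 4 1 =
      7 / 5 - (2 * (jacQuot (25 * ℓ) 0 * fifthJac ℓ 2 ^ 2 / fifthJac ℓ 1 ^ 3) -
        cexp (2 * ℓ) ^ 5 * jacQuot (25 * ℓ) 0 * fifthJac ℓ 1 ^ 2 / fifthJac ℓ 2 ^ 3) / 5 := by
    rw [fifthLambertComb_four_one hℓ, jacQuot_mul_fifthJac_two_sq_div hℓ,
      jacQuot_mul_fifthJac_one_sq_div hℓ]
    ring
  rw [show (-5 : ℤ) = 7 - 3 * 4 by norm_num, rankLambert_seven_sub_three_mul hℓ, hexp,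
    fifthLambertComb_four_two hℓ, hcomb, theta_three_mul_eq hℓ, fifthRatio]
  generalize cexp (2 * ℓ) = q at hq
  field_simp
  ring

end Evaluation

lemma rankLambertTerm_four_sub_neg (ℓ : ℂ) (b n : ℤ) :
    rankLambertTerm ℓ (4 - b) (-n) = -rankLambertTerm ℓ b n := by
  have hnum : (3 * ((-n : ℤ) : ℂ) ^ 2 + (-n : ℤ) + 2 * (4 - b : ℤ) * (-n : ℤ)) * ℓ =
      (3 * n ^ 2 + n + 2 * b * n) * ℓ - 10 * n * ℓ := by push_cast; ring
  have hden : 10 * ((-n : ℤ) : ℂ) * ℓ = -(10 * n * ℓ) := by push_cast; ring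
  rw [rankLambertTerm, rankLambertTerm, neg_one_zpow_neg, hnum, hden,
    Complex.exp_neg, Complex.exp_sub]
  have hE := Complex.exp_ne_zero (10 * n * ℓ)
  generalize cexp (10 * n * ℓ) = E at *
  rcases eq_or_ne E 1 with rfl | h1
  · simp
  · have hinv : 1 - E⁻¹ = -(1 - E) / E := by field_simp; ring
    rw [hinv]
    field_simp [sub_ne_zero.2 h1.symm]

lemma rankLambert_four_sub (ℓ : ℂ) (b : ℤ) : rankLambert ℓ (4 - b) = -rankLambert ℓ b := by
  rw [rankLambert, rankLambert, ← (Equiv.neg ℤ).tsum_eq, ← tsum_neg]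
  exact tsum_congr (rankLambertTerm_four_sub_neg ℓ b)

lemma rankLambert_two (ℓ : ℂ) : rankLambert ℓ 2 = 0 :=
  self_eq_neg.1 (rankLambert_four_sub ℓ 2)

lemma theta_neg_three_mul (a : ℂ) : theta a (-(3 * a)) = 0 := by
  have h := theta_add_two_mul a (-(3 * a))
  rw [show -(3 * a) + 2 * a = -a by ring, theta_neg_self] at h
  exact (mul_eq_zero.1 h.symm).resolve_left (neg_ne_zero.2 (Complex.exp_ne_zero _))

lemma rankLambert_neg_five {ℓ : ℂ} (hℓ : ℓ.re < 0) :
    rankLambert ℓ (-5) = rankLambert ℓ 0 - 1 := by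
  have hθ := hasSum_theta (re_three_mul_neg hℓ) (-(3 * (3 * ℓ)))
  rw [theta_neg_three_mul] at hθ
  have hzero := ((summable_rankLambert hℓ 0).hasSum.add hθ).sub (hasSum_ite_eq (0 : ℤ) (1 : ℂ))
  rw [add_zero] at hzero
  refine ((summable_rankLambert hℓ (-5)).hasSum.congr_fun fun n => ?_).unique hzero
  rcases eq_or_ne n 0 with rfl | hn
  · simp [rankLambertTerm]
  have hE : 1 - cexp (10 * n * ℓ) ≠ 0 := by
    rw [show 10 * n * ℓ = 2 * n * (5 * ℓ) by ring]
    exact sub_ne_zero.2 (exp_two_mul_int_mul_ne_one (by simpa using hℓ.ne) hn).symm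
  have hnum₀ : (3 * (n : ℂ) ^ 2 + n + 2 * (0 : ℤ) * n) * ℓ =
      3 * ℓ * n ^ 2 + -(3 * (3 * ℓ)) * n + 10 * n * ℓ := by push_cast; ring
  have hnum₅ : (3 * (n : ℂ) ^ 2 + n + 2 * (-5 : ℤ) * n) * ℓ =
      3 * ℓ * n ^ 2 + -(3 * (3 * ℓ)) * n := by push_cast; ring
  rw [rankLambertTerm, rankLambertTerm, hnum₀, hnum₅, Complex.exp_add _ (10 * n * ℓ), if_neg hn]
  generalize cexp (10 * n * ℓ) = E at *
  generalize cexp (3 * ℓ * n ^ 2 + -(3 * (3 * ℓ)) * n) = G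
  field_simp
  ring

/-! ### Periodicity in the logarithm of the nome -/

lemma exp_eq_exp_of_eq_add {x y : ℂ} (k : ℤ) (h : x = y + k * (2 * Real.pi * I)) :
    cexp x = cexp y :=
  Complex.exp_eq_exp_iff_exists_int.2 ⟨k, h⟩

lemma exists_mul_add_one_eq_two_mul (n : ℤ) : ∃ k : ℤ, (n : ℂ) * (n + 1) = 2 * k := by
  obtain ⟨k, hk⟩ := Int.even_mul_succ_self n
  exact ⟨k, by exact_mod_cast hk.trans (two_mul k).symm⟩

lemma periodic_jac : Function.Periodic jac (Real.pi * I) := by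
  intro τ
  refine funext fun u => tsum_congr fun n => ?_
  obtain ⟨k, hk⟩ := exists_mul_add_one_eq_two_mul n
  rw [exp_eq_exp_of_eq_add (k - n)]
  push_cast
  linear_combination Real.pi * I * hk

lemma periodic_theta_three_mul_neg :
    Function.Periodic (fun τ => theta (3 * τ) (-τ)) (Real.pi * I) := by
  intro τ
  refine tsum_congr fun n => ?_
  obtain ⟨k, hk⟩ := exists_mul_add_one_eq_two_mul n
  rw [exp_eq_exp_of_eq_add (3 * k - 2 * n)]
  push_cast
  linear_combination 3 * Real.pi * I * hk

lemma periodic_lambert (u : ℂ) : Function.Periodic (fun τ => lambert τ u 0) (Real.pi * I) := by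
  intro τ
  refine tsum_congr fun n => ?_
  obtain ⟨k, hk⟩ := exists_mul_add_one_eq_two_mul n
  have hnum : cexp (n * 0 + 3 * n * (n + 1) * (τ + Real.pi * I)) =
      cexp (n * 0 + 3 * n * (n + 1) * τ) :=
    exp_eq_exp_of_eq_add (3 * k) (by push_cast; linear_combination 3 * Real.pi * I * hk)
  have hden : cexp (u + 2 * n * (τ + Real.pi * I)) = cexp (u + 2 * n * τ) :=
    exp_eq_exp_of_eq_add n (by ring)
  rw [lambertTerm, lambertTerm, hnum, hden]

lemma periodic_lambert_arg (τ w : ℂ) :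
    Function.Periodic (fun u => lambert τ u w) (2 * Real.pi * I) := fun u =>
  tsum_congr fun n => by
    rw [lambertTerm, lambertTerm, exp_eq_exp_of_eq_add (x := u + 2 * Real.pi * I + _) 1]
    push_cast
    ring

lemma twentyFive_mul_add_pi_mul_I_div (ℓ : ℂ) :
    25 * (ℓ + Real.pi * I / 5) = 25 * ℓ + (5 : ℕ) * (Real.pi * I) := by
  push_cast
  ring

lemma ten_mul_add_pi_mul_I_div (ℓ : ℂ) (r : ℤ) :
    10 * r * (ℓ + Real.pi * I / 5) = 10 * r * ℓ + r * (2 * Real.pi * I) := by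
  ring

lemma periodic_fifthJac (r : ℤ) :
    Function.Periodic (fun ℓ => fifthJac ℓ r) (Real.pi * I / 5) := fun ℓ => by
  simp only [fifthJac]
  rw [twentyFive_mul_add_pi_mul_I_div, periodic_jac.nat_mul, ten_mul_add_pi_mul_I_div,
    jac_add_int_mul_two_pi_I]

lemma periodic_fifthTheta : Function.Periodic fifthTheta (Real.pi * I / 5) := fun ℓ => by
  rw [fifthTheta, twentyFive_mul_add_pi_mul_I_div]
  exact periodic_theta_three_mul_neg.nat_mul 5 _

lemma periodic_fifthRatio : Function.Periodic fifthRatio (Real.pi * I / 5) :=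
  (periodic_fifthJac 2).div (periodic_fifthJac 1)

lemma periodic_jacQuot_twentyFive_mul :
    Function.Periodic (fun ℓ => jacQuot (25 * ℓ) 0) (Real.pi * I / 5) := fun ℓ => by
  simp only [jacQuot_zero]
  rw [twentyFive_mul_add_pi_mul_I_div, periodic_jac.nat_mul]

lemma periodic_fifthLambert (r : ℤ) :
    Function.Periodic (fun ℓ => fifthLambert ℓ r 0) (Real.pi * I / 5) := fun ℓ => by
  simp only [fifthLambert, Int.cast_zero, mul_zero, zero_mul]
  rw [twentyFive_mul_add_pi_mul_I_div, ten_mul_add_pi_mul_I_div]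
  exact ((periodic_lambert _).nat_mul 5 _).trans ((periodic_lambert_arg _ _).int_mul r _)

lemma periodic_exp_two_mul_pow_five :
    Function.Periodic (fun ℓ => cexp (2 * ℓ) ^ 5) (Real.pi * I / 5) := fun ℓ => by
  simp only [← Complex.exp_nat_mul]
  exact exp_eq_exp_of_eq_add 1 (by push_cast; ring)

/-- `F` is, up to the factor `theta (3ℓ) ℓ`, a combination of `1, q, q², q³` with coefficients
invariant under `q ↦ exp (2πi/5) q`, where `q = exp (2ℓ)`. -/
def IsFourDissected (F : ℂ → ℂ) : Prop :=
  ∃ g : Fin 4 → ℂ → ℂ, (∀ i, Function.Periodic (g i) (Real.pi * I / 5)) ∧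
    ∀ ℓ : ℂ, ℓ.re ≤ -1 → F ℓ = theta (3 * ℓ) ℓ * ∑ i : Fin 4, cexp (2 * ℓ) ^ (i : ℕ) * g i ℓ

lemma isFourDissected_rankLambert_one : IsFourDissected fun ℓ => rankLambert ℓ 1 + 1 / 5 := by
  let ϖ : ℂ → ℂ := fun ℓ => jacQuot (25 * ℓ) 0 / fifthJac ℓ 2
  have hϖ : Function.Periodic ϖ (Real.pi * I / 5) :=
    periodic_jacQuot_twentyFive_mul.div (periodic_fifthJac 2)
  refine ⟨![fun ℓ => ϖ ℓ * fifthRatio ℓ ^ 2 / (5 * fifthTheta ℓ),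
    fun ℓ => ϖ ℓ * fifthRatio ℓ / (5 * fifthTheta ℓ),
    fun ℓ => 2 * ϖ ℓ / (5 * fifthTheta ℓ),
    fun ℓ => -(2 * ϖ ℓ / (5 * fifthRatio ℓ * fifthTheta ℓ)) -
      cexp (2 * ℓ) ^ 5 * fifthLambert ℓ 2 0 / fifthTheta ℓ], fun i ℓ => ?_, fun ℓ hℓ => ?_⟩
  · have hq := periodic_exp_two_mul_pow_five ℓ
    have hΛ := periodic_fifthLambert 2 ℓ
    fin_cases i <;> simp_all [periodic_fifthTheta ℓ, periodic_fifthRatio ℓ, hϖ ℓ]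
  · refine (rankLambert_one_dissection hℓ).trans ?_
    simp [Fin.sum_univ_four, ϖ]

lemma isFourDissected_rankLambert_zero : IsFourDissected fun ℓ => rankLambert ℓ 0 + 2 / 5 := by
  let ϖ : ℂ → ℂ := fun ℓ => jacQuot (25 * ℓ) 0 / fifthJac ℓ 1
  have hϖ : Function.Periodic ϖ (Real.pi * I / 5) :=
    periodic_jacQuot_twentyFive_mul.div (periodic_fifthJac 1)
  refine ⟨![fun ℓ => 2 * ϖ ℓ * fifthRatio ℓ / (5 * fifthTheta ℓ) -
      cexp (2 * ℓ) ^ 5 * fifthLambert ℓ 4 0 / fifthTheta ℓ,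
    fun ℓ => 2 * ϖ ℓ / (5 * fifthTheta ℓ),
    fun ℓ => -(ϖ ℓ / (5 * fifthRatio ℓ * fifthTheta ℓ)),
    fun ℓ => ϖ ℓ / (5 * fifthRatio ℓ ^ 2 * fifthTheta ℓ)], fun i ℓ => ?_, fun ℓ hℓ => ?_⟩
  · have hq := periodic_exp_two_mul_pow_five ℓ
    have hΛ := periodic_fifthLambert 4 ℓ
    fin_cases i <;> simp_all [periodic_fifthTheta ℓ, periodic_fifthRatio ℓ, hϖ ℓ]
  · have hzero : rankLambert ℓ 0 + 2 / 5 = rankLambert ℓ (-5) + 7 / 5 := by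
      rw [rankLambert_neg_five (by linarith)]
      ring
    simp [hzero, rankLambert_neg_five_dissection hℓ, Fin.sum_univ_four, ϖ]

/-! ### Partitions with a row or a column removed -/

/-- Partitions of arbitrary size, as multisets of positive integers. -/
abbrev PosMultiset : Type := {M : Multiset ℕ // 0 ∉ M}

/-- The largest part of a partition, `0` for the empty one. -/
def PosMultiset.largest (M : PosMultiset) : ℕ := M.1.sup

/-- The number of parts of a partition. -/
def PosMultiset.numParts (M : PosMultiset) : ℕ := Multiset.card M.1

/-- The Dyson rank, on partitions of arbitrary size. -/
def PosMultiset.rank (M : PosMultiset) : ℤ := M.largest - M.numParts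

lemma multiset_sup_mem {α : Type*} [LinearOrder α] [OrderBot α] {M : Multiset α} (hM : M ≠ 0) :
    M.sup ∈ M := by
  induction M using Multiset.induction with
  | empty => exact absurd rfl hM
  | cons a s ih =>
    rw [Multiset.sup_cons]
    rcases eq_or_ne s 0 with rfl | hs
    · simp
    · rcases le_total a s.sup with h | h
      · rw [sup_eq_right.2 h]
        exact Multiset.mem_cons_of_mem (ih hs)
      · rw [sup_eq_left.2 h]
        exact Multiset.mem_cons_self _ _

lemma PosMultiset.largest_ne_zero {M : PosMultiset} (hM : M.1 ≠ 0) : M.largest ≠ 0 := by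
  intro h
  have hmem : M.largest ∈ M.1 := multiset_sup_mem hM
  rw [h] at hmem
  exact M.2 hmem

/-- Decrease every part by one, discarding the zeros. -/
def predParts (M : Multiset ℕ) : Multiset ℕ := (M.map (· - 1)).filter (· ≠ 0)

lemma card_predParts_le (M : Multiset ℕ) : Multiset.card (predParts M) ≤ Multiset.card M :=
  (Multiset.card_le_card (Multiset.filter_le _ _)).trans_eq (Multiset.card_map _ _)

lemma sup_predParts (M : Multiset ℕ) : (predParts M).sup = M.sup - 1 := by
  refine le_antisymm (Multiset.sup_le.2 fun b hb => ?_)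
    (Nat.sub_le_of_le_add (Multiset.sup_le.2 fun a ha => ?_))
  · obtain ⟨a, ha, rfl⟩ := Multiset.mem_map.1 (Multiset.mem_of_mem_filter hb)
    exact Nat.sub_le_sub_right (Multiset.le_sup ha) 1
  · by_cases h : a - 1 = 0
    · omega
    · exact Nat.le_add_of_sub_le (Multiset.le_sup (Multiset.mem_filter.2
        ⟨Multiset.mem_map_of_mem _ ha, h⟩))

lemma map_succ_predParts_add_replicate {M : Multiset ℕ} (hM : 0 ∉ M) :
    (predParts M).map (· + 1) +
      Multiset.replicate (Multiset.card M - Multiset.card (predParts M)) 1 = M := by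
  induction M using Multiset.induction with
  | empty => simp [predParts]
  | cons a s ih =>
    rw [Multiset.mem_cons, not_or] at hM
    specialize ih hM.2
    rcases Nat.lt_or_ge 1 a with ha | ha
    · have hcons : predParts (a ::ₘ s) = (a - 1) ::ₘ predParts s := by
        rw [predParts, Multiset.map_cons, Multiset.filter_cons_of_pos _ (by omega), predParts]
      rw [hcons, Multiset.map_cons, Multiset.card_cons, Multiset.card_cons, Multiset.cons_add,
        Nat.add_sub_add_right, ih, Nat.sub_add_cancel ha.le]
    · obtain rfl : a = 1 := by omega
      have hcons : predParts (1 ::ₘ s) = predParts s := by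
        rw [predParts, Multiset.map_cons, Multiset.filter_cons_of_neg _ (by simp), predParts]
      rw [hcons, Multiset.card_cons, Nat.succ_sub (card_predParts_le s), Multiset.replicate_succ,
        Multiset.add_cons, ih]

lemma sum_predParts_add_card {M : Multiset ℕ} (hM : 0 ∉ M) :
    (predParts M).sum + Multiset.card M = M.sum := by
  have h := congrArg Multiset.sum (map_succ_predParts_add_replicate hM)
  rw [Multiset.sum_add, Multiset.sum_map_add, Multiset.map_id', Multiset.map_const',
    Multiset.sum_replicate, Multiset.sum_replicate, smul_eq_mul, smul_eq_mul] at h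
  have := card_predParts_le M
  omega

lemma predParts_map_succ_add_replicate {M : Multiset ℕ} (hM : 0 ∉ M) (k : ℕ) :
    predParts (M.map (· + 1) + Multiset.replicate k 1) = M := by
  have hones : (Multiset.replicate k (1 - 1)).filter (· ≠ 0) = 0 :=
    Multiset.filter_eq_nil.2 fun a ha => by simp [Multiset.eq_of_mem_replicate ha]
  rw [predParts, Multiset.map_add, Multiset.map_map, Multiset.filter_add, Multiset.map_replicate,
    hones, add_zero, show ((· - 1) ∘ (· + 1) : ℕ → ℕ) = id from rfl, Multiset.map_id]
  exact Multiset.filter_eq_self.2 fun a ha h => hM (h ▸ ha)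

/-- Remove the first column of a partition, remembering its length. -/
def removeColumn : PosMultiset ≃ {p : PosMultiset × ℕ // p.1.numParts ≤ p.2} where
  toFun M := ⟨⟨⟨predParts M.1, by simp [predParts]⟩, M.numParts⟩, card_predParts_le M.1⟩
  invFun p := ⟨p.1.1.1.map (· + 1) + Multiset.replicate (p.1.2 - p.1.1.numParts) 1, by
    simp [Multiset.mem_replicate]⟩
  left_inv M := Subtype.ext (map_succ_predParts_add_replicate M.2)
  right_inv p := by
    obtain ⟨⟨M, k⟩, h⟩ := p
    refine Subtype.ext (Prod.ext (Subtype.ext (predParts_map_succ_add_replicate M.2 _)) ?_)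
    simpa [PosMultiset.numParts] using Nat.add_sub_cancel' h

/-- Remove the first row (a largest part) of a partition, remembering its length. -/
def removeRow : PosMultiset ≃ {p : PosMultiset × ℕ // p.1.largest ≤ p.2} where
  toFun M := ⟨⟨⟨M.1.erase M.largest, fun h => M.2 (Multiset.mem_of_mem_erase h)⟩, M.largest⟩,
    Multiset.sup_mono fun _ h => Multiset.mem_of_mem_erase h⟩
  invFun p := if h : p.1.2 = 0 then ⟨0, Multiset.notMem_zero 0⟩ else
    ⟨p.1.2 ::ₘ p.1.1.1, Multiset.mem_cons.not.2 (not_or.2 ⟨Ne.symm h, p.1.1.2⟩)⟩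
  left_inv M := by
    by_cases hM : M.1 = 0
    · obtain rfl : M = ⟨0, Multiset.notMem_zero 0⟩ := Subtype.ext hM
      simp [PosMultiset.largest]
    · simp only [dif_neg (PosMultiset.largest_ne_zero hM)]
      exact Subtype.ext (Multiset.cons_erase (multiset_sup_mem hM))
  right_inv p := by
    obtain ⟨⟨M, k⟩, h⟩ := p
    rcases eq_or_ne k 0 with rfl | hk
    · obtain rfl : M = ⟨0, Multiset.notMem_zero 0⟩ := Subtype.ext <| by_contra fun hM =>
        PosMultiset.largest_ne_zero hM (Nat.le_zero.1 h)
      simp [PosMultiset.largest]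
    · have hsup : (k ::ₘ M.1).sup = k := by
        rw [Multiset.sup_cons]
        exact sup_eq_left.2 h
      simp only [dif_neg hk, PosMultiset.largest, hsup, Multiset.erase_cons_head]

lemma tsum_comp_equiv_subtype {α β : Type*} {p : β → Prop} [DecidablePred p]
    (e : α ≃ {x // p x}) (F : β → ℂ) : ∑' y, F (e y) = ∑' x, if p x then F x else 0 := by
  rw [e.tsum_eq (fun x => F x)]
  exact (tsum_subtype {x | p x} F).trans (tsum_congr fun x => by simp [Set.indicator_apply])

lemma tsum_prod_eq_tsum_add {α : Type*} {F : α × ℕ → ℂ} {m : ℕ}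
    (hF : ∀ x n, n < m → F (x, n) = 0) : ∑' p, F p = ∑' p : α × ℕ, F (p.1, p.2 + m) := by
  have hinj : Function.Injective fun p : α × ℕ => (p.1, p.2 + m) := by
    rintro ⟨x, n⟩ ⟨y, k⟩ h
    simpa using h
  refine (hinj.tsum_eq fun ⟨x, n⟩ hp => ⟨(x, n - m), Prod.ext rfl ?_⟩).symm
  exact Nat.sub_add_cancel (not_lt.1 fun h => hp (hF x n h))

/-- The equivalence `e` removes from a partition `M` a piece of size `a M`, which lowers the
statistic `b` by one. Conjugation of partitions exchanges the two instances, the removal of the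
first row and the removal of the first column. -/
structure IsPeeling (a b : PosMultiset → ℕ)
    (e : PosMultiset ≃ {p : PosMultiset × ℕ // a p.1 ≤ p.2}) : Prop where
  snd_eq : ∀ M, (e M).1.2 = a M
  sum_add : ∀ M, (e M).1.1.1.sum + a M = M.1.sum
  eq_add_one : ∀ M, M.1 ≠ 0 → b M = b (e M).1.1 + 1

lemma isPeeling_removeColumn :
    IsPeeling PosMultiset.numParts PosMultiset.largest removeColumn where
  snd_eq _ := rfl
  sum_add M := sum_predParts_add_card M.2
  eq_add_one M hM := by
    have hsup : (removeColumn M).1.1.largest = M.largest - 1 := sup_predParts M.1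
    have hpos := PosMultiset.largest_ne_zero hM
    omega

lemma isPeeling_removeRow : IsPeeling PosMultiset.largest PosMultiset.numParts removeRow where
  snd_eq _ := rfl
  sum_add M := by
    rcases eq_or_ne M.1 0 with hM | hM
    · change (M.1.erase M.1.sup).sum + M.1.sup = M.1.sum
      simp [hM]
    · rw [add_comm]
      exact Multiset.sum_erase (multiset_sup_mem hM)
  eq_add_one _ hM := (Multiset.card_erase_add_one (multiset_sup_mem hM)).symm

namespace IsPeeling

variable {a b : PosMultiset → ℕ} {e : PosMultiset ≃ {p : PosMultiset × ℕ // a p.1 ≤ p.2}}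

lemma apply_eq_zero (h : IsPeeling a b e) {M : PosMultiset} (hM : M.1 = 0) : a M = 0 := by
  have := h.sum_add M
  rw [hM, Multiset.sum_zero] at this
  omega

lemma fst_eq_zero (h : IsPeeling a b e) {M : PosMultiset} (hM : M.1 = 0) :
    (e M).1.1.1 = 0 := by
  have hsum := h.sum_add M
  rw [hM, Multiset.sum_zero] at hsum
  refine Multiset.eq_zero_of_forall_notMem fun x hx => (e M).1.1.2 ?_
  obtain rfl : x = 0 := by
    have := Multiset.le_sum_of_mem hx
    omega
  exact hx

end IsPeeling

/-! ### Generating functions of partitions by rank -/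

/-- Partitions of all integers as multisets of positive integers. -/
def sigmaPartitionEquiv : (Σ n, Nat.Partition n) ≃ PosMultiset where
  toFun p := ⟨p.2.parts, fun h => lt_irrefl _ (p.2.parts_pos h)⟩
  invFun M := ⟨M.1.sum, ⟨M.1, fun {i} h => Nat.pos_of_ne_zero fun h0 => M.2 (h0 ▸ h), rfl⟩⟩
  left_inv := by
    rintro ⟨_, ⟨M, h, rfl⟩⟩
    rfl
  right_inv _ := rfl

lemma card_partition_le_two_pow (n : ℕ) : Fintype.card (Nat.Partition n) ≤ 2 ^ n := by
  refine (Fintype.card_le_of_surjective _ Nat.Partition.ofComposition_surj).trans ?_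
  rw [composition_card]
  exact Nat.pow_le_pow_right (by norm_num) (Nat.sub_le n 1)

section

variable {q : ℂ}

lemma summable_pow_sum (hq : ‖q‖ < 1 / 2) : Summable fun M : PosMultiset => q ^ M.1.sum := by
  rw [← sigmaPartitionEquiv.summable_iff]
  refine Summable.of_norm ?_
  rw [summable_sigma_of_nonneg fun _ => norm_nonneg _]
  refine ⟨fun n => Summable.of_finite, ?_⟩
  have hgeom : Summable fun n : ℕ => (2 * ‖q‖) ^ n :=
    summable_geometric_of_lt_one (by positivity) (by linarith)
  refine hgeom.of_nonneg_of_le (fun n => tsum_nonneg fun _ => norm_nonneg _) fun n => ?_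
  have hnorm (π : Nat.Partition n) :
      ‖((fun M : PosMultiset => q ^ M.1.sum) ∘ sigmaPartitionEquiv) ⟨n, π⟩‖ = ‖q‖ ^ n := by
    change ‖q ^ π.parts.sum‖ = _
    rw [π.parts_sum, norm_pow]
  rw [tsum_congr hnorm, tsum_fintype, Finset.sum_const, Finset.card_univ, nsmul_eq_mul, mul_pow]
  gcongr
  exact_mod_cast card_partition_le_two_pow n

lemma summable_ite_pow_sum (hq : ‖q‖ < 1 / 2) (p : PosMultiset → Prop) [DecidablePred p] :
    Summable fun M : PosMultiset => if p M then q ^ M.1.sum else 0 := by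
  refine Summable.of_norm_bounded (summable_pow_sum hq).norm fun M => ?_
  split_ifs <;> simp

/-- The generating function of all partitions. -/
noncomputable def partGen (q : ℂ) : ℂ := ∑' M : PosMultiset, q ^ M.1.sum

open Classical in
/-- The generating function of nonempty partitions whose statistic `r` is at least `m`. -/
noncomputable def tailGen (r : PosMultiset → ℤ) (q : ℂ) (m : ℕ) : ℂ :=
  ∑' M : PosMultiset, if M.1 ≠ 0 ∧ (m : ℤ) ≤ r M then q ^ M.1.sum else 0

lemma norm_tailGen_le (hq : ‖q‖ < 1 / 2) (r : PosMultiset → ℤ) (m : ℕ) :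
    ‖tailGen r q m‖ ≤ ∑' M : PosMultiset, ‖q ^ M.1.sum‖ := by
  classical
  refine tsum_of_norm_bounded (summable_pow_sum hq).norm.hasSum fun M => ?_
  split_ifs <;> simp

open Classical in
lemma partGen_sub_tailGen (hq : ‖q‖ < 1 / 2) (r : PosMultiset → ℤ) (m : ℕ) :
    partGen q - tailGen r q m =
      ∑' M : PosMultiset, if M.1 = 0 ∨ r M < m then q ^ M.1.sum else 0 := by
  rw [partGen, tailGen, ← (summable_pow_sum hq).tsum_sub (summable_ite_pow_sum hq _)]
  refine tsum_congr fun M => ?_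
  by_cases h : M.1 = 0 ∨ r M < m
  · rw [if_pos h, if_neg (by simpa [imp_iff_not_or] using h), sub_zero]
  · rw [if_neg h, if_pos (by simpa using h), sub_self]

namespace IsPeeling

variable {a b : PosMultiset → ℕ} {e : PosMultiset ≃ {p : PosMultiset × ℕ // a p.1 ≤ p.2}}

lemma tailGen_sub_eq_tsum (h : IsPeeling a b e) (q : ℂ) (m : ℕ) :
    tailGen (fun M => a M - b M) q m = ∑' p : PosMultiset × ℕ,
      if a p.1 ≤ p.2 ∧ b p.1 + (m + 1) ≤ p.2 then q ^ (p.1.1.sum + p.2) else 0 := by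
  simp only [ite_and]
  rw [← tsum_comp_equiv_subtype e
    fun p => if b p.1 + (m + 1) ≤ p.2 then q ^ (p.1.1.sum + p.2) else 0]
  refine tsum_congr fun M => if_congr ?_ (by rw [h.snd_eq, h.sum_add]) rfl
  rw [h.snd_eq]
  by_cases hM : M.1 = 0
  · simp [hM, h.apply_eq_zero hM]
  · have hb := h.eq_add_one M hM
    beta_reduce
    rw [and_iff_right hM]
    omega

lemma partGen_sub_tailGen_sub_eq_tsum {e : PosMultiset ≃ {p : PosMultiset × ℕ // b p.1 ≤ p.2}}
    (h : IsPeeling b a e) (ha : ∀ M : PosMultiset, M.1 = 0 → a M = 0) (hq : ‖q‖ < 1 / 2) (m : ℕ) :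
    partGen q - tailGen (fun M => a M - b M) q (m + 3) = ∑' p : PosMultiset × ℕ,
      if b p.1 ≤ p.2 ∧ a p.1 ≤ p.2 + (m + 1) then q ^ (p.1.1.sum + p.2) else 0 := by
  classical
  simp only [ite_and]
  rw [partGen_sub_tailGen hq,
    ← tsum_comp_equiv_subtype e fun p => if a p.1 ≤ p.2 + (m + 1) then q ^ (p.1.1.sum + p.2) else 0]
  refine tsum_congr fun M => if_congr ?_ (by rw [h.snd_eq, h.sum_add]) rfl
  rw [h.snd_eq]
  by_cases hM : M.1 = 0
  · simp [hM, ha _ (h.fst_eq_zero hM)]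
  · have hb := h.eq_add_one M hM
    rw [or_iff_right hM]
    omega

/-- A partition with `a - b ≥ m` and a partition with `a - b < m + 3` leave, after removal of a
piece of size `a`, respectively `b`, the same remainders, the removed pieces differing in size by
`m + 1`. -/
lemma tailGen_sub (h : IsPeeling a b e)
    {e' : PosMultiset ≃ {p : PosMultiset × ℕ // b p.1 ≤ p.2}} (h' : IsPeeling b a e')
    (hq : ‖q‖ < 1 / 2) (m : ℕ) :
    tailGen (fun M => a M - b M) q m =
      q ^ (m + 1) * (partGen q - tailGen (fun M => a M - b M) q (m + 3)) := by
  rw [h.tailGen_sub_eq_tsum, h'.partGen_sub_tailGen_sub_eq_tsum (fun _ => h.apply_eq_zero) hq,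
    ← tsum_mul_left, tsum_prod_eq_tsum_add (m := m + 1) fun M n hn => if_neg (by omega)]
  refine tsum_congr fun p => ?_
  rw [mul_ite, mul_zero]
  refine if_congr ?_ (by ring) rfl
  rw [add_le_add_iff_right, and_comm]

end IsPeeling

lemma tailGen_rank (hq : ‖q‖ < 1 / 2) (m : ℕ) :
    tailGen PosMultiset.rank q m =
      q ^ (m + 1) * (partGen q - tailGen PosMultiset.rank q (m + 3)) :=
  isPeeling_removeRow.tailGen_sub isPeeling_removeColumn hq m

lemma tailGen_neg_rank (hq : ‖q‖ < 1 / 2) (m : ℕ) :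
    tailGen (-PosMultiset.rank) q m =
      q ^ (m + 1) * (partGen q - tailGen (-PosMultiset.rank) q (m + 3)) := by
  have hrank : -PosMultiset.rank = fun M => (M.numParts : ℤ) - M.largest :=
    funext fun M => neg_sub (M.largest : ℤ) M.numParts
  rw [hrank]
  exact isPeeling_removeColumn.tailGen_sub isPeeling_removeRow hq m

end

/-! ### The pentagonal series -/

lemma norm_exp_two_mul_lt {ℓ : ℂ} (hℓ : ℓ.re ≤ -1) : ‖cexp (2 * ℓ)‖ < 1 / 2 := by
  have hre : (2 * ℓ).re ≤ -1 := by simp; linarith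
  rw [Complex.norm_exp]
  linarith [Real.exp_le_exp.2 hre, Real.exp_neg_one_lt_d9]

lemma norm_exp_two_mul_pow_succ_le {ℓ : ℂ} (hℓ : ℓ.re ≤ -1) (n : ℕ) :
    ‖cexp (2 * ℓ) ^ (n + 1)‖ ≤ 1 / 2 := by
  have hq := (norm_exp_two_mul_lt hℓ).le
  rw [norm_pow]
  exact (pow_le_of_le_one (norm_nonneg _) (by linarith) n.succ_ne_zero).trans hq

lemma neg_one_zpow_add_one (n : ℕ) : (-1 : ℂ) ^ ((n : ℤ) + 1) = -(-1) ^ n := by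
  rw [zpow_add₀ (by norm_num)]
  simp

/-- The terms `(-1)^n q^(N(3N-1)/2)` of the pentagonal series, where `N = n + 1` and
`q = exp (2ℓ)`. -/
noncomputable def pentTerm (ℓ : ℂ) (n : ℕ) : ℂ :=
  (-1) ^ n * cexp ((3 * (n + 1) ^ 2 - (n + 1)) * ℓ)

/-- The series `∑ (-1)^n q^(N(3N-1)/2 + Nm)` over `N = n + 1 ≥ 1`, where `q = exp (2ℓ)`: the
generating function of nonempty partitions of rank at least `m`, divided by that of all
partitions. -/
noncomputable def pentTail (ℓ : ℂ) (m : ℕ) : ℂ :=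
  ∑' n, pentTerm ℓ n * (cexp (2 * ℓ) ^ (n + 1)) ^ m

lemma pentTerm_zero (ℓ : ℂ) : pentTerm ℓ 0 = cexp (2 * ℓ) := by
  rw [pentTerm, pow_zero, one_mul]
  congr 1
  push_cast
  ring

lemma pentTerm_succ (ℓ : ℂ) (n : ℕ) :
    pentTerm ℓ (n + 1) = -pentTerm ℓ n * cexp (2 * ℓ) ^ (3 * n + 4) := by
  have harg : (3 * (((n + 1 : ℕ) : ℂ) + 1) ^ 2 - (((n + 1 : ℕ) : ℂ) + 1)) * ℓ =
      (3 * ((n : ℂ) + 1) ^ 2 - (n + 1)) * ℓ + ((3 * n + 4 : ℕ) : ℂ) * (2 * ℓ) := by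
    push_cast
    ring
  rw [pentTerm, pentTerm, ← Complex.exp_nat_mul, pow_succ, harg, Complex.exp_add]
  ring

lemma summable_norm_pentTerm {ℓ : ℂ} (hℓ : ℓ.re < 0) : Summable fun n => ‖pentTerm ℓ n‖ := by
  have hinj : Function.Injective fun n : ℕ => (n : ℤ) + 1 := fun a b h => by simpa using h
  refine ((hasSum_theta (re_three_mul_neg hℓ) (-ℓ)).summable.norm.comp_injective hinj).congr
    fun n => ?_
  have harg : 3 * ℓ * (((n : ℤ) + 1 : ℤ) : ℂ) ^ 2 + -ℓ * ((n : ℤ) + 1 : ℤ) =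
      (3 * (n + 1) ^ 2 - (n + 1)) * ℓ := by
    push_cast
    ring
  simp only [Function.comp_apply, pentTerm, norm_mul, norm_pow, norm_zpow, norm_neg, norm_one,
    one_pow, one_zpow, harg]

section

variable {ℓ : ℂ} (hℓ : ℓ.re ≤ -1)
include hℓ

lemma norm_pentTerm_mul_pow_le (m n : ℕ) :
    ‖pentTerm ℓ n * (cexp (2 * ℓ) ^ (n + 1)) ^ m‖ ≤ ‖pentTerm ℓ n‖ := by
  rw [norm_mul, norm_pow]
  refine mul_le_of_le_one_right (norm_nonneg _) (pow_le_one₀ (norm_nonneg _) ?_)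
  linarith [norm_exp_two_mul_pow_succ_le hℓ n]

lemma summable_pentTail (m : ℕ) :
    Summable fun n => pentTerm ℓ n * (cexp (2 * ℓ) ^ (n + 1)) ^ m :=
  Summable.of_norm_bounded (summable_norm_pentTerm (by linarith)) (norm_pentTerm_mul_pow_le hℓ m)

lemma norm_pentTail_le (m : ℕ) : ‖pentTail ℓ m‖ ≤ ∑' n, ‖pentTerm ℓ n‖ :=
  tsum_of_norm_bounded (summable_norm_pentTerm (by linarith : ℓ.re < 0)).hasSum
    (norm_pentTerm_mul_pow_le hℓ m)

lemma pentTail_eq_mul_one_sub (m : ℕ) :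
    pentTail ℓ m = cexp (2 * ℓ) ^ (m + 1) * (1 - pentTail ℓ (m + 3)) := by
  rw [pentTail, (summable_pentTail hℓ m).tsum_eq_zero_add, pentTail, mul_sub, ← tsum_mul_left,
    sub_eq_add_neg, ← tsum_neg, pentTerm_zero]
  congr 1
  · ring
  · refine tsum_congr fun n => ?_
    rw [pentTerm_succ]
    ring

lemma theta_eq_one_sub_pentTail : theta (3 * ℓ) ℓ = 1 - pentTail ℓ 0 - pentTail ℓ 1 := by
  have h := HasSum.of_add_one_of_neg_add_one
    (f := fun n : ℤ => (-1 : ℂ) ^ n * cexp (3 * ℓ * n ^ 2 + ℓ * n))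
    ((summable_pentTail hℓ 1).hasSum.neg.congr_fun fun n => ?_)
    ((summable_pentTail hℓ 0).hasSum.neg.congr_fun fun n => ?_)
  · rw [theta, h.tsum_eq, pentTail, pentTail]
    simp
    ring
  · rw [pentTerm, ← Complex.exp_nat_mul, pow_one, mul_assoc ((-1) ^ n), ← Complex.exp_add,
      neg_one_zpow_add_one, neg_mul]
    congr 3
    push_cast
    ring
  · rw [pentTerm, pow_zero, mul_one, neg_one_zpow_neg, neg_one_zpow_add_one, neg_mul]
    congr 3
    push_cast
    ring

end

/-! ### Rank generating functions as Lambert series -/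

lemma eq_zero_of_norm_le_mul_norm {α E : Type*} [NormedAddCommGroup E] {f : α → α} {D : α → E}
    {c B : ℝ} (hc₀ : 0 ≤ c) (hc₁ : c < 1) (hB : ∀ x, ‖D x‖ ≤ B)
    (hD : ∀ x, ‖D x‖ ≤ c * ‖D (f x)‖) (x : α) : D x = 0 := by
  have hpow (k : ℕ) : ∀ x, ‖D x‖ ≤ c ^ k * B := by
    induction k with
    | zero => simpa using hB
    | succ k ih =>
      intro x
      calc ‖D x‖ ≤ c * ‖D (f x)‖ := hD x
        _ ≤ c * (c ^ k * B) := mul_le_mul_of_nonneg_left (ih (f x)) hc₀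
        _ = c ^ (k + 1) * B := by ring
  have hlim : Tendsto (fun k : ℕ => c ^ k * B) atTop (𝓝 0) := by
    simpa using (tendsto_pow_atTop_nhds_zero_of_lt_one hc₀ hc₁).mul_const B
  exact norm_le_zero_iff.1 (ge_of_tendsto' hlim fun k => hpow k x)

/-- Both sides solve the functional equation `X m = q^(m+1) (P - X (m+3))`, whose bounded solution
is unique. -/
lemma tailGen_eq_partGen_mul_pentTail {ℓ : ℂ} (hℓ : ℓ.re ≤ -1) {r : PosMultiset → ℤ}
    (hr : ∀ m, tailGen r (cexp (2 * ℓ)) m = cexp (2 * ℓ) ^ (m + 1) *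
      (partGen (cexp (2 * ℓ)) - tailGen r (cexp (2 * ℓ)) (m + 3))) (m : ℕ) :
    tailGen r (cexp (2 * ℓ)) m = partGen (cexp (2 * ℓ)) * pentTail ℓ m := by
  let D : ℕ → ℂ := fun m => tailGen r (cexp (2 * ℓ)) m - partGen (cexp (2 * ℓ)) * pentTail ℓ m
  have hbound (m : ℕ) : ‖D m‖ ≤ ∑' M : PosMultiset, ‖cexp (2 * ℓ) ^ M.1.sum‖ +
      ‖partGen (cexp (2 * ℓ))‖ * ∑' n, ‖pentTerm ℓ n‖ := by
    refine (norm_sub_le _ _).trans (add_le_add (norm_tailGen_le (norm_exp_two_mul_lt hℓ) r m) ?_)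
    rw [norm_mul]
    exact mul_le_mul_of_nonneg_left (norm_pentTail_le hℓ m) (norm_nonneg _)
  have hstep (m : ℕ) : D m = -(cexp (2 * ℓ) ^ (m + 1) * D (m + 3)) := by
    simp only [D]
    rw [hr m, pentTail_eq_mul_one_sub hℓ m]
    ring
  refine sub_eq_zero.1 (eq_zero_of_norm_le_mul_norm (D := D) (f := (· + 3)) (c := 1 / 2)
    (by norm_num) (by norm_num) hbound (fun m => ?_) m)
  rw [hstep, norm_neg, norm_mul]
  exact mul_le_mul_of_nonneg_right (norm_exp_two_mul_pow_succ_le hℓ m) (norm_nonneg _)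

lemma partGen_eq_one_add_tailGen {q : ℂ} (hq : ‖q‖ < 1 / 2) (r : PosMultiset → ℤ) :
    partGen q = 1 + tailGen r q 0 + tailGen (-r) q 1 := by
  classical
  have hempty : HasSum (fun M : PosMultiset =>
      if M = ⟨0, Multiset.notMem_zero 0⟩ then (1 : ℂ) else 0) 1 := hasSum_ite_eq _ _
  rw [partGen, ← hempty.tsum_eq, tailGen, tailGen,
    ← hempty.summable.tsum_add (summable_ite_pow_sum hq _),
    ← (hempty.summable.add (summable_ite_pow_sum hq _)).tsum_add (summable_ite_pow_sum hq _)]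
  refine tsum_congr fun ⟨M, hM⟩ => ?_
  rcases eq_or_ne M 0 with rfl | hne
  · simp
  · by_cases hr : 0 ≤ r ⟨M, hM⟩
    · simp [hne, hr, show ¬ 1 ≤ -r ⟨M, hM⟩ by omega]
    · simp [hne, hr, show 1 ≤ -r ⟨M, hM⟩ by omega]

lemma partGen_mul_theta {ℓ : ℂ} (hℓ : ℓ.re ≤ -1) :
    partGen (cexp (2 * ℓ)) * theta (3 * ℓ) ℓ = 1 := by
  have hq := norm_exp_two_mul_lt hℓ
  have h := partGen_eq_one_add_tailGen hq PosMultiset.rank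
  rw [tailGen_eq_partGen_mul_pentTail hℓ (tailGen_rank hq),
    tailGen_eq_partGen_mul_pentTail hℓ (tailGen_neg_rank hq)] at h
  rw [theta_eq_one_sub_pentTail hℓ]
  linear_combination h

lemma one_sub_pow_ne_zero {w : ℂ} (hw : ‖w‖ < 1) {t : ℕ} (ht : t ≠ 0) : 1 - w ^ t ≠ 0 := by
  intro h
  have hlt : ‖w ^ t‖ < 1 := by
    rw [norm_pow]
    exact pow_lt_one₀ (norm_nonneg w) hw ht
  rw [← sub_eq_zero.1 h, norm_one] at hlt
  exact lt_irrefl _ hlt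

lemma norm_one_sub_div_one_sub_pow_le {w : ℂ} (hw : ‖w‖ ≤ 1 / 2) {t : ℕ} (ht : t ≠ 0) :
    ‖(1 - w) / (1 - w ^ t)‖ ≤ 3 := by
  have hpow : ‖w ^ t‖ ≤ 1 / 2 := by
    rw [norm_pow]
    exact (pow_le_of_le_one (norm_nonneg w) (by linarith) ht).trans hw
  have hnum : ‖1 - w‖ ≤ 1 + ‖w‖ := (norm_sub_le _ _).trans_eq (by rw [norm_one])
  have hden : 1 - ‖w ^ t‖ ≤ ‖1 - w ^ t‖ := by
    simpa only [norm_one] using norm_sub_norm_le (1 : ℂ) (w ^ t)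
  rw [norm_div, div_le_iff₀ (by linarith)]
  linarith

/-- The summands of `pentTail ℓ m` times `(1 - q^N) / (1 - q^(5N))`, where `N = n + 1` and
`q = exp (2ℓ)`. They belong to the partitions of rank at least `m` and congruent to `m` modulo
five. -/
noncomputable def congTerm (ℓ : ℂ) (m n : ℕ) : ℂ :=
  pentTerm ℓ n * (cexp (2 * ℓ) ^ (n + 1)) ^ m *
    ((1 - cexp (2 * ℓ) ^ (n + 1)) / (1 - (cexp (2 * ℓ) ^ (n + 1)) ^ 5))

section

variable {ℓ : ℂ} (hℓ : ℓ.re ≤ -1)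
include hℓ

lemma one_sub_exp_two_mul_pow_five_ne_zero (n : ℕ) :
    1 - (cexp (2 * ℓ) ^ (n + 1)) ^ 5 ≠ 0 :=
  one_sub_pow_ne_zero (by linarith [norm_exp_two_mul_pow_succ_le hℓ n]) (by norm_num)

lemma norm_congTerm_le (m n : ℕ) : ‖congTerm ℓ m n‖ ≤ ‖pentTerm ℓ n‖ * 3 := by
  rw [congTerm, norm_mul]
  exact mul_le_mul (norm_pentTerm_mul_pow_le hℓ m n) (norm_one_sub_div_one_sub_pow_le
    (norm_exp_two_mul_pow_succ_le hℓ n) (by norm_num)) (norm_nonneg _) (norm_nonneg _)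

lemma summable_congTerm (m : ℕ) : Summable (congTerm ℓ m) :=
  Summable.of_norm_bounded ((summable_norm_pentTerm (by linarith)).mul_right 3)
    (norm_congTerm_le hℓ m)

lemma tendsto_tsum_congTerm : Tendsto (fun m => ∑' n, congTerm ℓ m n) atTop (𝓝 0) := by
  have h := tendsto_tsum_of_dominated_convergence (𝓕 := atTop) (f := congTerm ℓ)
    (g := fun _ => (0 : ℂ)) ((summable_norm_pentTerm (by linarith : ℓ.re < 0)).mul_right 3)
    (fun n => ?_) (Eventually.of_forall fun m => norm_congTerm_le hℓ m)
  · simpa using h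
  · have hw : ‖cexp (2 * ℓ) ^ (n + 1)‖ < 1 := by
      linarith [norm_exp_two_mul_pow_succ_le hℓ n]
    simpa only [mul_zero, zero_mul, congTerm] using
      ((tendsto_pow_atTop_nhds_zero_of_norm_lt_one hw).const_mul (pentTerm ℓ n)).mul_const _

lemma tsum_congTerm_sub (m : ℕ) :
    ∑' n, congTerm ℓ m n - ∑' n, congTerm ℓ (m + 5) n = pentTail ℓ m - pentTail ℓ (m + 1) := by
  rw [pentTail, pentTail, ← (summable_congTerm hℓ m).tsum_sub (summable_congTerm hℓ _),
    ← (summable_pentTail hℓ m).tsum_sub (summable_pentTail hℓ _)]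
  refine tsum_congr fun n => ?_
  have hw := one_sub_exp_two_mul_pow_five_ne_zero hℓ n
  rw [congTerm, congTerm]
  generalize cexp (2 * ℓ) ^ (n + 1) = w at *
  field_simp
  ring

end

lemma rankLambertTerm_sub_eq_congTerm (ℓ : ℂ) (k n : ℕ) :
    rankLambertTerm ℓ k (n + 1) - rankLambertTerm ℓ (k - 1) (n + 1) = congTerm ℓ k n := by
  have hnum (b : ℤ) : cexp ((3 * ((n + 1 : ℤ) : ℂ) ^ 2 + (n + 1 : ℤ) + 2 * b * (n + 1 : ℤ)) * ℓ) =
      cexp ((3 * (n + 1) ^ 2 - (n + 1)) * ℓ) * (cexp (2 * ℓ) ^ (n + 1)) ^ (b + 1) := by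
    rw [← Complex.exp_nat_mul, ← Complex.exp_int_mul, ← Complex.exp_add]
    congr 1
    push_cast
    ring
  have hden : cexp (10 * ((n + 1 : ℤ) : ℂ) * ℓ) = (cexp (2 * ℓ) ^ (n + 1)) ^ 5 := by
    simp only [← Complex.exp_nat_mul]
    congr 1
    push_cast
    ring
  rw [rankLambertTerm, rankLambertTerm, hnum, hnum, hden, neg_one_zpow_add_one, congTerm, pentTerm,
    sub_add_cancel, zpow_natCast, zpow_add_one₀ (pow_ne_zero _ (Complex.exp_ne_zero _)),
    zpow_natCast]
  ring

lemma rankLambert_sub {ℓ : ℂ} (hℓ : ℓ.re ≤ -1) {k j : ℕ} (hkj : k + j = 5) :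
    rankLambert ℓ k - rankLambert ℓ (k - 1) = ∑' n, congTerm ℓ k n + ∑' n, congTerm ℓ j n := by
  have hk : (4 : ℤ) - k = j - 1 ∧ (4 : ℤ) - (k - 1) = j := by omega
  have hsum := HasSum.of_add_one_of_neg_add_one
    (f := fun n : ℤ => rankLambertTerm ℓ k n - rankLambertTerm ℓ (k - 1) n)
    ((summable_congTerm hℓ k).hasSum.congr_fun (rankLambertTerm_sub_eq_congTerm ℓ k))
    ((summable_congTerm hℓ j).hasSum.congr_fun fun n => ?_)
  · have hℓ₀ : ℓ.re < 0 := by linarith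
    rw [rankLambert, rankLambert,
      ← (summable_rankLambert hℓ₀ k).tsum_sub (summable_rankLambert hℓ₀ _), hsum.tsum_eq]
    simp [rankLambertTerm]
  · rw [← rankLambertTerm_sub_eq_congTerm, ← hk.1, ← hk.2, ← neg_neg ((n : ℤ) + 1),
      rankLambertTerm_four_sub_neg, rankLambertTerm_four_sub_neg, neg_neg]
    ring

open Classical in
/-- The generating function of nonempty partitions whose statistic `r` is at least `m` and
congruent to `m` modulo five. -/
noncomputable def congGen (r : PosMultiset → ℤ) (q : ℂ) (m : ℕ) : ℂ :=
  ∑' M : PosMultiset, if M.1 ≠ 0 ∧ (m : ℤ) ≤ r M ∧ (5 : ℤ) ∣ r M - m then q ^ M.1.sum else 0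

lemma tendsto_congGen {q : ℂ} (hq : ‖q‖ < 1 / 2) (r : PosMultiset → ℤ) :
    Tendsto (congGen r q) atTop (𝓝 0) := by
  classical
  have h := tendsto_tsum_of_dominated_convergence (𝓕 := atTop)
    (f := fun (m : ℕ) (M : PosMultiset) =>
      if M.1 ≠ 0 ∧ (m : ℤ) ≤ r M ∧ (5 : ℤ) ∣ r M - m then q ^ M.1.sum else 0)
    (g := fun _ => (0 : ℂ)) (summable_pow_sum hq).norm (fun M => ?_)
    (Eventually.of_forall fun m M => ?_)
  · rwa [tsum_zero] at h
  · refine tendsto_const_nhds.congr' ?_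
    filter_upwards [eventually_gt_atTop (r M).toNat] with m hm
    rw [if_neg]
    omega
  · split_ifs <;> simp

lemma congGen_sub {q : ℂ} (hq : ‖q‖ < 1 / 2) (r : PosMultiset → ℤ) (m : ℕ) :
    congGen r q m - congGen r q (m + 5) = tailGen r q m - tailGen r q (m + 1) := by
  classical
  rw [congGen, congGen, tailGen, tailGen,
    ← (summable_ite_pow_sum hq _).tsum_sub (summable_ite_pow_sum hq _),
    ← (summable_ite_pow_sum hq _).tsum_sub (summable_ite_pow_sum hq _)]
  refine tsum_congr fun M => ?_
  by_cases hM : M.1 = 0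
  · simp [hM]
  · simp only [ne_eq, hM, not_false_eq_true, true_and]
    split_ifs <;> first | omega | simp

lemma eq_zero_of_periodic_of_tendsto {E : Type*} [TopologicalSpace E] [T2Space E] [Zero E]
    {D : ℕ → E} {t : ℕ} (hD : Function.Periodic D t) (ht : t ≠ 0)
    (hlim : Tendsto D atTop (𝓝 0)) : D = 0 := by
  ext m
  have hsub : Tendsto (fun k => m + k * t) atTop atTop :=
    tendsto_atTop_mono (fun k => (Nat.le_mul_of_pos_right k (Nat.pos_of_ne_zero ht)).trans
      (Nat.le_add_left _ m)) tendsto_id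
  exact tendsto_nhds_unique
    (tendsto_const_nhds.congr fun k => (hD.nat_mul k m).symm) (hlim.comp hsub)

lemma congGen_eq_partGen_mul_tsum {ℓ : ℂ} (hℓ : ℓ.re ≤ -1) {r : PosMultiset → ℤ}
    (hr : ∀ m, tailGen r (cexp (2 * ℓ)) m = cexp (2 * ℓ) ^ (m + 1) *
      (partGen (cexp (2 * ℓ)) - tailGen r (cexp (2 * ℓ)) (m + 3))) (m : ℕ) :
    congGen r (cexp (2 * ℓ)) m = partGen (cexp (2 * ℓ)) * ∑' n, congTerm ℓ m n := by
  have hq := norm_exp_two_mul_lt hℓ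
  refine sub_eq_zero.1 (congrFun (eq_zero_of_periodic_of_tendsto (t := 5)
    (D := fun m => congGen r (cexp (2 * ℓ)) m - partGen (cexp (2 * ℓ)) * ∑' n, congTerm ℓ m n)
    (fun m => ?_) (by norm_num) ?_) m)
  · have htail := congGen_sub hq r m
    rw [tailGen_eq_partGen_mul_pentTail hℓ hr, tailGen_eq_partGen_mul_pentTail hℓ hr] at htail
    linear_combination partGen (cexp (2 * ℓ)) * tsum_congTerm_sub hℓ m - htail
  · simpa using
      (tendsto_congGen hq r).sub ((tendsto_tsum_congTerm hℓ).const_mul (partGen (cexp (2 * ℓ))))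

open Classical in
/-- The generating function of partitions whose rank is congruent to `k` modulo five. -/
noncomputable def rankGen (q : ℂ) (k : ℤ) : ℂ :=
  ∑' M : PosMultiset, if (5 : ℤ) ∣ M.rank - k then q ^ M.1.sum else 0

lemma PosMultiset.rank_of_eq_zero {M : PosMultiset} (hM : M.1 = 0) : M.rank = 0 := by
  simp [PosMultiset.rank, PosMultiset.largest, PosMultiset.numParts, hM]

lemma rankGen_eq_congGen_add {q : ℂ} (hq : ‖q‖ < 1 / 2) {k j : ℕ} (hk : 0 < k) (hj : 0 < j)
    (hkj : k + j = 5) :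
    rankGen q k = congGen PosMultiset.rank q k + congGen (-PosMultiset.rank) q j := by
  classical
  rw [rankGen, congGen, congGen,
    ← (summable_ite_pow_sum hq _).tsum_add (summable_ite_pow_sum hq _)]
  refine tsum_congr fun M => ?_
  by_cases hM : M.1 = 0
  · rw [if_neg (by rw [PosMultiset.rank_of_eq_zero hM]; omega), if_neg fun h => h.1 hM,
      if_neg fun h => h.1 hM, add_zero]
  · simp only [Pi.neg_apply, ne_eq, hM, not_false_eq_true, true_and]
    split_ifs <;> first | omega | simp

lemma rankGen_eq_partGen_mul {ℓ : ℂ} (hℓ : ℓ.re ≤ -1) {k : ℕ} (hk : 0 < k) (hk5 : k < 5) :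
    rankGen (cexp (2 * ℓ)) k =
      partGen (cexp (2 * ℓ)) * (rankLambert ℓ k - rankLambert ℓ (k - 1)) := by
  have hq := norm_exp_two_mul_lt hℓ
  have hkj : k + (5 - k) = 5 := by omega
  rw [rankGen_eq_congGen_add hq hk (by omega) hkj,
    congGen_eq_partGen_mul_tsum hℓ (tailGen_rank hq),
    congGen_eq_partGen_mul_tsum hℓ (tailGen_neg_rank hq), rankLambert_sub hℓ hkj, mul_add]

lemma hasSum_card_mul_pow {q : ℂ} (hq : ‖q‖ < 1 / 2) (p : PosMultiset → Prop)
    [DecidablePred p] :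
    HasSum (fun n : ℕ => (Nat.card {π : Nat.Partition n // p (sigmaPartitionEquiv ⟨n, π⟩)} : ℂ) *
      q ^ n) (∑' M : PosMultiset, if p M then q ^ M.1.sum else 0) := by
  have h := (sigmaPartitionEquiv.hasSum_iff.2 (summable_ite_pow_sum hq p).hasSum).sigma
    fun n => hasSum_fintype _
  refine h.congr_fun fun n => ?_
  have hterm (π : Nat.Partition n) :
      ((fun M : PosMultiset => if p M then q ^ M.1.sum else 0) ∘ sigmaPartitionEquiv) ⟨n, π⟩ =
        if p (sigmaPartitionEquiv ⟨n, π⟩) then q ^ n else 0 := by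
    have hsum : (sigmaPartitionEquiv ⟨n, π⟩).1.sum = n := π.parts_sum
    simp only [Function.comp_apply, hsum]
  rw [Finset.sum_congr rfl fun π _ => hterm π, ← Finset.sum_filter, Finset.sum_const,
    nsmul_eq_mul, Nat.card_eq_fintype_card, Fintype.card_subtype]

/-- The deviation `N(k,5,n) - p(n)/5` of the ranks of the partitions of `n` from
equidistribution. -/
noncomputable def rankDeviation (k : ℤ) (n : ℕ) : ℂ :=
  (Nat.card {π : Nat.Partition n // π.rank ≡ k [ZMOD 5]} : ℂ) -
    (Nat.card (Nat.Partition n) : ℂ) / 5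

lemma hasSum_rankDeviation {q : ℂ} (hq : ‖q‖ < 1 / 2) (k : ℤ) :
    HasSum (fun n => rankDeviation k n * q ^ n) (rankGen q k - partGen q / 5) := by
  classical
  have hrank := hasSum_card_mul_pow hq fun M => (5 : ℤ) ∣ M.rank - k
  have hall := hasSum_card_mul_pow hq fun _ => True
  simp only [if_true] at hall
  refine (hrank.sub (hall.div_const 5)).congr_fun fun n => ?_
  have hcard : Nat.card {π : Nat.Partition n // π.rank ≡ k [ZMOD 5]} =
      Nat.card {π : Nat.Partition n // (5 : ℤ) ∣ (sigmaPartitionEquiv ⟨n, π⟩).rank - k} :=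
    Nat.card_congr (Equiv.subtypeEquivRight fun _ =>
      (Int.modEq_comm).trans Int.modEq_iff_dvd)
  have htrue : Nat.card {_π : Nat.Partition n // True} = Nat.card (Nat.Partition n) :=
    Nat.card_congr (Equiv.subtypeUnivEquiv fun _ => trivial)
  rw [rankDeviation, hcard, htrue]
  ring

/-! ### Coefficients of dissected power series -/

lemma sum_pow_pow_eq_zero {R : Type*} [CommRing R] [IsDomain R] {ω : R} {t m : ℕ}
    (hω : IsPrimitiveRoot ω t) (hm : ¬ t ∣ m) : ∑ j ∈ Finset.range t, (ω ^ j) ^ m = 0 := by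
  have hne : ω ^ m - 1 ≠ 0 := sub_ne_zero.2 fun h => hm ((hω.pow_eq_one_iff_dvd m).1 h)
  have hgeom : (∑ j ∈ Finset.range t, (ω ^ m) ^ j) * (ω ^ m - 1) = 0 := by
    rw [geom_sum_mul, pow_right_comm, hω.pow_eq_one, one_pow, sub_self]
  simpa only [pow_right_comm ω] using (mul_eq_zero.1 hgeom).resolve_right hne

lemma sum_pow_pow_eq_natCast {R : Type*} [CommRing R] {ω : R} {t m : ℕ} (hω : ω ^ t = 1)
    (hm : t ∣ m) : ∑ j ∈ Finset.range t, (ω ^ j) ^ m = t := by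
  obtain ⟨c, rfl⟩ := hm
  have hterm (j : ℕ) : (ω ^ j) ^ (t * c) = 1 := by
    rw [pow_mul, pow_right_comm ω, hω, one_pow, one_pow]
  simp [hterm]

lemma eq_zero_of_hasSum_of_frequently_eq_zero {a : ℕ → ℂ} {f : ℂ → ℂ}
    (hf : ∀ᶠ z in 𝓝 0, HasSum (fun n => a n * z ^ n) (f z)) (hzero : ∃ᶠ z in 𝓝[≠] 0, f z = 0) :
    a = 0 := by
  have hser : HasFPowerSeriesAt f (FormalMultilinearSeries.ofScalars ℂ a) 0 := by
    rw [hasFPowerSeriesAt_iff]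
    simpa [FormalMultilinearSeries.coeff_ofScalars, mul_comm] using hf
  have hp := hser.eq_zero_of_eventually
    (hser.analyticAt.frequently_zero_iff_eventually_zero.1 hzero)
  exact (FormalMultilinearSeries.ofScalars_series_eq_zero ℂ).1 hp

lemma hasSum_sum_mul_rootOfUnity {a : ℕ → ℂ} {f : ℂ → ℂ} {R : ℝ}
    (hf : ∀ q : ℂ, ‖q‖ < R → HasSum (fun n => a n * q ^ n) (f q)) {ω : ℂ} (hω : ‖ω‖ = 1)
    (t : ℕ) {q : ℂ} (hq : ‖q‖ < R) :
    HasSum (fun n => (a n * ∑ j ∈ Finset.range t, (ω ^ j) ^ (n + 1)) * q ^ n)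
      (∑ j ∈ Finset.range t, ω ^ j * f (ω ^ j * q)) := by
  have hnorm (j : ℕ) : ‖ω ^ j * q‖ < R := by rwa [norm_mul, norm_pow, hω, one_pow, one_mul]
  refine (hasSum_sum fun j _ => (hf _ (hnorm j)).mul_left (ω ^ j)).congr_fun fun n => ?_
  rw [Finset.mul_sum, Finset.sum_mul]
  exact Finset.sum_congr rfl fun j _ => by ring

section

variable {r t : ℕ} {c : ℝ} {f : ℂ → ℂ} {g : Fin r → ℂ → ℂ}

lemma sum_mul_rootOfUnity_eq_zero (hrt : r < t)
    (hg : ∀ i, Function.Periodic (g i) (Real.pi * I / t))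
    (h : ∀ ℓ : ℂ, ℓ.re ≤ c → f (cexp (2 * ℓ)) = ∑ i : Fin r, cexp (2 * ℓ) ^ (i : ℕ) * g i ℓ)
    {ℓ : ℂ} (hℓ : ℓ.re ≤ c) :
    ∑ j ∈ Finset.range t, cexp (2 * Real.pi * I / t) ^ j *
      f (cexp (2 * Real.pi * I / t) ^ j * cexp (2 * ℓ)) = 0 := by
  have hω := Complex.isPrimitiveRoot_exp t (by omega)
  have hmul (j : ℕ) : cexp (2 * Real.pi * I / t) ^ j * cexp (2 * ℓ) =
      cexp (2 * (ℓ + j * (Real.pi * I / t))) := by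
    rw [← Complex.exp_nat_mul, ← Complex.exp_add]
    congr 1
    ring
  have hre (j : ℕ) : (ℓ + j * (Real.pi * I / t)).re = ℓ.re := by
    simp [Complex.div_natCast_re]
  have hterm (j : ℕ) : cexp (2 * Real.pi * I / t) ^ j *
      f (cexp (2 * Real.pi * I / t) ^ j * cexp (2 * ℓ)) = ∑ i : Fin r,
        cexp (2 * ℓ) ^ (i : ℕ) * g i ℓ * (cexp (2 * Real.pi * I / t) ^ j) ^ ((i : ℕ) + 1) := by
    rw [hmul, h _ (by rwa [hre]), Finset.mul_sum]
    refine Finset.sum_congr rfl fun i _ => ?_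
    rw [(hg i).nat_mul j ℓ, ← hmul]
    ring
  rw [Finset.sum_congr rfl fun j _ => hterm j, Finset.sum_comm]
  refine Finset.sum_eq_zero fun i _ => ?_
  rw [← Finset.mul_sum, sum_pow_pow_eq_zero hω (Nat.not_dvd_of_pos_of_lt (by omega) (by omega)),
    mul_zero]

lemma exists_exp_two_mul_eq (c : ℝ) {z : ℂ} (hz₀ : z ≠ 0) (hz : ‖z‖ < Real.exp (2 * c)) :
    ∃ ℓ : ℂ, ℓ.re ≤ c ∧ cexp (2 * ℓ) = z := by
  refine ⟨Complex.log z / 2, ?_, by rw [mul_div_cancel₀ _ two_ne_zero, Complex.exp_log hz₀]⟩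
  have hlog := (Real.log_lt_iff_lt_exp (norm_pos_iff.2 hz₀)).2 hz
  have hre : (Complex.log z / 2).re = Real.log ‖z‖ / 2 := by
    rw [← Complex.log_re]
    simp
  linarith

/-- The roots-of-unity filter extracting the exponents `n` with `t ∣ n + 1` kills each of the `r`
components. -/
lemma coeff_eq_zero_of_dissection {a : ℕ → ℂ} {R : ℝ} (hR : 0 < R)
    (hf : ∀ q : ℂ, ‖q‖ < R → HasSum (fun n => a n * q ^ n) (f q)) (hrt : r < t)
    (hg : ∀ i, Function.Periodic (g i) (Real.pi * I / t))
    (h : ∀ ℓ : ℂ, ℓ.re ≤ c → f (cexp (2 * ℓ)) = ∑ i : Fin r, cexp (2 * ℓ) ^ (i : ℕ) * g i ℓ)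
    {n : ℕ} (hn : t ∣ n + 1) : a n = 0 := by
  have hω := Complex.isPrimitiveRoot_exp t (by omega)
  have hball {ρ : ℝ} (hρ : 0 < ρ) : ∀ᶠ z : ℂ in 𝓝 0, ‖z‖ < ρ := by
    filter_upwards [Metric.ball_mem_nhds (0 : ℂ) hρ] with z hz
    rwa [mem_ball_zero_iff] at hz
  have hcoeff := eq_zero_of_hasSum_of_frequently_eq_zero
    ((hball hR).mono fun q => hasSum_sum_mul_rootOfUnity hf (hω.norm'_eq_one (by omega)) t) <| by
    refine Eventually.frequently ?_
    filter_upwards [(hball (Real.exp_pos (2 * c))).filter_mono nhdsWithin_le_nhds,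
      self_mem_nhdsWithin] with z hz hz₀
    obtain ⟨ℓ, hℓ, rfl⟩ := exists_exp_two_mul_eq c hz₀ hz
    exact sum_mul_rootOfUnity_eq_zero hrt hg h hℓ
  have hn₀ := congrFun hcoeff n
  rw [sum_pow_pow_eq_natCast hω.pow_eq_one hn] at hn₀
  exact (mul_eq_zero.1 hn₀).resolve_right (Nat.cast_ne_zero.2 (by omega))

end

/-! ### Equidistribution -/

namespace IsFourDissected

variable {F G : ℂ → ℂ}

lemma add (hF : IsFourDissected F) (hG : IsFourDissected G) :
    IsFourDissected (F + G) := by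
  obtain ⟨u, hu, hFu⟩ := hF
  obtain ⟨v, hv, hGv⟩ := hG
  refine ⟨fun i => u i + v i, fun i => (hu i).add (hv i), fun ℓ hℓ => ?_⟩
  rw [Pi.add_apply, hFu ℓ hℓ, hGv ℓ hℓ, ← mul_add, ← Finset.sum_add_distrib]
  simp only [Pi.add_apply, mul_add]

lemma neg (hF : IsFourDissected F) : IsFourDissected (-F) := by
  obtain ⟨u, hu, hFu⟩ := hF
  refine ⟨fun i => -u i, fun i ℓ => congrArg Neg.neg (hu i ℓ), fun ℓ hℓ => ?_⟩
  rw [Pi.neg_apply, hFu ℓ hℓ, ← mul_neg, ← Finset.sum_neg_distrib]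
  simp only [Pi.neg_apply, mul_neg]

end IsFourDissected

lemma isFourDissected_rankLambert_sub {k : ℕ} (hk : 0 < k) (hk5 : k < 5) :
    IsFourDissected fun ℓ => rankLambert ℓ k - rankLambert ℓ (k - 1) - 1 / 5 := by
  have h₂ := rankLambert_two
  have h₃ (ℓ : ℂ) : rankLambert ℓ 3 = -rankLambert ℓ 1 := rankLambert_four_sub ℓ 1
  have h₄ (ℓ : ℂ) : rankLambert ℓ 4 = -rankLambert ℓ 0 := rankLambert_four_sub ℓ 0
  have hzero := isFourDissected_rankLambert_zero
  have hone := isFourDissected_rankLambert_one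
  interval_cases k
  · convert! hone.add hzero.neg using 2 with ℓ
    norm_num
    ring
  · convert! hone.neg using 2 with ℓ
    norm_num [h₂]
    ring
  · convert! hone.neg using 2 with ℓ
    norm_num [h₂, h₃]
    ring
  · convert! hone.add hzero.neg using 2 with ℓ
    norm_num [h₃, h₄]
    ring

lemma rankDeviation_eq_zero {k : ℕ} (hk : 0 < k) (hk5 : k < 5) (n : ℕ) :
    rankDeviation k (5 * n + 4) = 0 := by
  obtain ⟨g, hg, hsub⟩ := isFourDissected_rankLambert_sub hk hk5
  refine coeff_eq_zero_of_dissection (t := 5) (c := -1) (g := g) one_half_pos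
    (fun q hq => hasSum_rankDeviation hq k) (by norm_num) (by simpa using hg)
    (fun ℓ hℓ => ?_) ⟨n + 1, by ring⟩
  rw [rankGen_eq_partGen_mul hℓ hk hk5]
  linear_combination partGen (cexp (2 * ℓ)) * hsub ℓ hℓ +
    (∑ i : Fin 4, cexp (2 * ℓ) ^ (i : ℕ) * g i ℓ) * partGen_mul_theta hℓ

lemma card_rank_modEq {k : ℕ} (hk : 0 < k) (hk5 : k < 5) (n : ℕ) :
    (Nat.card {π : Nat.Partition (5 * n + 4) // π.rank ≡ k [ZMOD 5]} : ℚ) =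
      (Nat.card (Nat.Partition (5 * n + 4)) : ℚ) / 5 :=
  Rat.cast_injective (α := ℂ) (by push_cast; exact sub_eq_zero.1 (rankDeviation_eq_zero hk hk5 n))

lemma sum_card_modEq {α : Type*} [Finite α] (r : α → ℤ) {t : ℕ} (ht : t ≠ 0) :
    ∑ k ∈ Finset.range t, Nat.card {x // r x ≡ k [ZMOD t]} = Nat.card α := by
  classical
  have := Fintype.ofFinite α
  have ht₀ : (0 : ℤ) < t := by positivity
  have hmod (x : α) : 0 ≤ r x % t ∧ r x % t < t :=
    ⟨Int.emod_nonneg _ ht₀.ne', Int.emod_lt_of_pos _ ht₀⟩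
  rw [Nat.card_eq_fintype_card, ← Finset.card_univ,
    Finset.card_eq_sum_card_fiberwise (f := fun x => (r x % t).toNat) (t := Finset.range t)
      fun x _ => by have := hmod x; simp; omega]
  refine Finset.sum_congr rfl fun k hk => ?_
  rw [Nat.card_eq_fintype_card, Fintype.card_subtype]
  refine congrArg Finset.card (Finset.filter_congr fun x _ => ?_)
  have hkt : (k : ℤ) % t = k := Int.emod_eq_of_lt (by positivity) (by simpa using hk)
  have := hmod x
  rw [Int.ModEq, hkt]
  omega

end DysonRank

/-- Dyson's conjecture mod 5 (Atkin–Swinnerton-Dyer): for `0 ≤ k ≤ 4`,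
`N(k,5,5n+4) = p(5n+4)/5`, where `N(k,t,m)` counts partitions of `m` whose rank is
congruent to `k` modulo `t`. -/
theorem rank_equidistribution_mod_five (n : ℕ) (k : ℤ) (hk₀ : 0 ≤ k) (hk₁ : k ≤ 4) :
    (Nat.card {π : Nat.Partition (5 * n + 4) // π.rank ≡ k [ZMOD 5]} : ℚ) =
      (Nat.card (Nat.Partition (5 * n + 4)) : ℚ) / 5 := by
  lift k to ℕ using hk₀
  rcases Nat.eq_zero_or_pos k with rfl | hk
  · have hpos : ∀ j ∈ Finset.range 4,
        (Nat.card {π : Nat.Partition (5 * n + 4) // π.rank ≡ (j + 1 : ℕ) [ZMOD 5]} : ℚ) =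
          (Nat.card (Nat.Partition (5 * n + 4)) : ℚ) / 5 := fun j hj =>
      DysonRank.card_rank_modEq j.succ_pos (Nat.succ_lt_succ (Finset.mem_range.1 hj)) n
    have htotal : (∑ j ∈ Finset.range 5,
        Nat.card {π : Nat.Partition (5 * n + 4) // π.rank ≡ j [ZMOD 5]} : ℚ) =
          Nat.card (Nat.Partition (5 * n + 4)) := by
      exact_mod_cast DysonRank.sum_card_modEq Nat.Partition.rank (t := 5) (by norm_num)
    rw [Finset.sum_range_succ', Finset.sum_congr rfl hpos, Finset.sum_const, Finset.card_range,
      nsmul_eq_mul] at htotal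
    push_cast at htotal ⊢
    linear_combination htotal
  · exact DysonRank.card_rank_modEq hk (by omega) n
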